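/- Let Γ be a connected non-bipartite graph such that the vertex set of every odd cycle of Γ is a dominating set. Then H^1_m(R/I^t) ≠ 0 for some t ≥ 1 if and only if Γ has two disjoint maximal independent sets F, G such that the induced subgraph Γ_{F∪G} is connected. In this case, H^1_m(R/I^t) ≠ 0 for every t ≥ |F| + |G|. -/

import Mathlib

open MvPolynomial

noncomputable section

/-- The edge ideal of a graph `Γ` on vertex set `σ`, in `k[x_i : i ∈ σ]`. -/
def edgeIdeal (k : Type) [Field k] {σ : Type} (Γ : SimpleGraph σ) :
    Ideal (MvPolynomial σ k) :=
  Ideal.span { m | ∃ i j : σ, Γ.Adj i j ∧ m = X i * X j }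

/-- The maximal graded ideal `(x_i : i ∈ σ)` of `k[x_i : i ∈ σ]`. -/
def maxIdeal (k : Type) [Field k] (σ : Type) : Ideal (MvPolynomial σ k) :=
  Ideal.span (Set.range (X : σ → MvPolynomial σ k))

/-- `depth R/J = 0`, i.e. the maximal graded ideal is an associated prime of `R/J`. -/
def DepthZero (k : Type) [Field k] {σ : Type} (J : Ideal (MvPolynomial σ k)) : Prop :=
  maxIdeal k σ ∈ associatedPrimes (MvPolynomial σ k) (MvPolynomial σ k ⧸ J)

/-- The `i`-th local cohomology of `R/J` with support in the maximal graded ideal. -/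
def locCoh (k : Type) [Field k] {σ : Type} (J : Ideal (MvPolynomial σ k)) (i : ℕ) :=
  (localCohomology (maxIdeal k σ) i).obj (ModuleCat.of _ (MvPolynomial σ k ⧸ J))

/-- `depth R/J`, defined as the least `i` with `H^i_m(R/J) ≠ 0`. -/
def rDepth (k : Type) [Field k] {σ : Type} (J : Ideal (MvPolynomial σ k)) : ℕ :=
  sInf { i | Nontrivial (locCoh k J i) }

/-- A set `U` of vertices is dominating: every vertex outside `U` is adjacent to a
vertex of `U`. -/
def Dominating {σ : Type} (Γ : SimpleGraph σ) (U : Set σ) : Prop :=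
  ∀ v ∉ U, ∃ u ∈ U, Γ.Adj u v

/-- The closed neighborhood `N[v]` of a vertex. -/
def closedNbhd {σ : Type} (Γ : SimpleGraph σ) (v : σ) : Set σ :=
  insert v { u | Γ.Adj v u }

/-- The closed neighborhood `N[C]` of a set of vertices. -/
def closedNbhdSet {σ : Type} (Γ : SimpleGraph σ) (C : Set σ) : Set σ :=
  ⋃ v ∈ C, closedNbhd Γ v

/-- An odd cycle of length `m` (given as an injective map `ZMod m → σ` with consecutive
vertices adjacent) in `Γ`. -/
def IsOddCycle {σ : Type} (Γ : SimpleGraph σ) (m : ℕ) (c : ZMod m → σ) : Prop :=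
  Odd m ∧ 3 ≤ m ∧ Function.Injective c ∧ ∀ i, Γ.Adj (c i) (c (i + 1))

/-- `F` is an independent set of `Γ`. -/
def IsIndep {σ : Type} [Fintype σ] [DecidableEq σ] (Γ : SimpleGraph σ) (F : Finset σ) : Prop :=
  ∀ i ∈ F, ∀ j ∈ F, ¬ Γ.Adj i j

/-- `F` is a maximal independent set of `Γ`. -/
def IsMaxIndep {σ : Type} [Fintype σ] [DecidableEq σ] (Γ : SimpleGraph σ) (F : Finset σ) : Prop :=
  IsIndep Γ F ∧ ∀ G : Finset σ, IsIndep Γ G → F ⊆ G → G = F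

/-- The prime ideal `P_F = (x_i : i ∉ F)`. -/
def PF (k : Type) [Field k] {σ : Type} [Fintype σ] [DecidableEq σ] (F : Finset σ) :
    Ideal (MvPolynomial σ k) :=
  Ideal.span { m | ∃ i ∉ F, m = X i }

/-- The `t`-th symbolic power `I^{(t)} = ⋂_{F maximal independent} P_F^t` of the edge ideal. -/
def symbPow (k : Type) [Field k] {σ : Type} [Fintype σ] [DecidableEq σ]
    (Γ : SimpleGraph σ) (t : ℕ) : Ideal (MvPolynomial σ k) :=
  ⨅ F ∈ { F : Finset σ | IsMaxIndep Γ F }, PF k F ^ t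

/-- The monomial `x^a`. -/
def xPow (k : Type) [Field k] {σ : Type} [Fintype σ] (a : σ → ℕ) : MvPolynomial σ k :=
  ∏ i, X i ^ a i

/-- The localization `R[x_i^{-1} : i ∈ F]`. -/
abbrev locAt (k : Type) [Field k] {σ : Type} (F : Finset σ) :=
  Localization (Submonoid.closure ((fun i => (X i : MvPolynomial σ k)) '' (F : Set σ)))

/-- The degree complex `Δ_a(J) = {F : x^a ∉ J·R[x_i^{-1} : i ∈ F]}` of a monomial ideal `J`. -/
def degComplex (k : Type) [Field k] {σ : Type} [Fintype σ] (J : Ideal (MvPolynomial σ k))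
    (a : σ → ℕ) : Set (Finset σ) :=
  { F | algebraMap (MvPolynomial σ k) (locAt k F) (xPow k a) ∉
      J.map (algebraMap (MvPolynomial σ k) (locAt k F)) }

/-- `F` is a facet (maximal face) of the complex `Δ`. -/
def IsFacet {σ : Type} (Δ : Set (Finset σ)) (F : Finset σ) : Prop :=
  F ∈ Δ ∧ ∀ G ∈ Δ, F ⊆ G → G = F

/-- The complex `Δ` is disconnected: its vertex set splits into two nonempty parts such that
no face meets both. -/
def ComplexDisconnected {σ : Type} (Δ : Set (Finset σ)) : Prop :=
  ∃ A B : Set σ, A.Nonempty ∧ B.Nonempty ∧ Disjoint A B ∧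
    (∀ i, {i} ∈ Δ ↔ i ∈ A ∪ B) ∧
    ∀ F ∈ Δ, ¬ ((∃ i ∈ F, i ∈ A) ∧ (∃ j ∈ F, j ∈ B))

/-- The polynomial ring `R_v = k[x_i : i ≠ v]`. -/
abbrev Rv (k : Type) [Field k] {σ : Type} (v : σ) := MvPolynomial { i : σ // i ≠ v } k

/-- The localization `R[x_v^{-1}]`. -/
abbrev LocAway (k : Type) [Field k] {σ : Type} (v : σ) :=
  Localization.Away (X v : MvPolynomial σ k)

/-- For an ideal `I` of `R`, the ideal `I_v = I·R[x_v^{-1}] ∩ R_v` of `R_v`. -/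
def idealV (k : Type) [Field k] {σ : Type} (I : Ideal (MvPolynomial σ k)) (v : σ) :
    Ideal (Rv k v) :=
  Ideal.comap ((algebraMap (MvPolynomial σ k) (LocAway k v)).comp
      (MvPolynomial.rename (Subtype.val : { i : σ // i ≠ v } → σ)).toRingHom)
    (I.map (algebraMap (MvPolynomial σ k) (LocAway k v)))

/-- The edge ideal of the induced subgraph `Γ_U` in `k[x_i : i ∈ U]`. -/
def edgeIdealOn (k : Type) [Field k] {σ : Type} (Γ : SimpleGraph σ) (U : Set σ) :
    Ideal (MvPolynomial U k) :=
  Ideal.span { m | ∃ i j : U, Γ.Adj (i : σ) (j : σ) ∧ m = X i * X j }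

/-- `Γ` has no isolated vertices. -/
def NoIsolated {σ : Type} (Γ : SimpleGraph σ) : Prop :=
  ∀ v : σ, ∃ u : σ, Γ.Adj v u

/-!
Computing `H¹_m(R/J)` as the colimit of `Ext¹(R/mˢ, R/J)`, its elements are homomorphisms
`mˢ → R/J`, taken to be zero if they agree on some power of `m` with multiplication by an element.
For a monomial ideal `J`, such an element can be assembled degree by degree: the coefficients
prescribed at the vertices of the degree complex `Δ_a(J)` agree along its edges, so they glue if
every `Δ_a(J)` is connected (and no vertex is isolated, which takes care of the degrees with a
negative entry).

Let `J = Iᵗ`. As odd cycles dominate, `Γ ∖ N[i]` is bipartite for each vertex `i`, and an uncrossing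
argument in the style of König's theorem shows that `i` is a vertex of `Δ_a(Iᵗ)` exactly if some
maximal independent set `F ∋ i` satisfies `∑_{v ∉ F} a_v < t`. If `Δ_a(Iᵗ)` is disconnected, two
such sets `F`, `G` taken from different parts are disjoint; were `Γ_{F ∪ G}` disconnected,
exchanging `F` and `G` off one of its components would produce a face meeting both parts.

Conversely, let `Γ_{F ∪ G}` be connected with a spanning tree, and let `x^a` be the product of the
`|F| + |G| - 1` tree edges and of `t - |F| - |G|` copies of one edge. Walking in the tree shows
`x^a x_i x_j ∈ Iᵗ` for `i ∈ F` and `j ∉ F`, so that `f ↦ x^a f|_F` is a homomorphism `m → R/Iᵗ`; it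
is `x^a` on the variables in `F` and `0` on those in `G`, hence not a multiplication.
-/

section SyzygySequence

open CategoryTheory Limits

universe v u v' u'

variable {C : Type u} [Category.{v} C] [Abelian C]

/-- The augmentation `P₀ ⟶ Z` of a projective resolution of `Z`, with its target freed from the
single-object complex used by `ProjectiveResolution.π`. -/
def augmentation {Z : C} (P : ProjectiveResolution Z) : P.complex.X 0 ⟶ Z :=
  P.π.f 0

instance {Z : C} (P : ProjectiveResolution Z) : Epi (augmentation P) :=
  inferInstanceAs (Epi (P.π.f 0))

lemma d_comp_augmentation {Z : C} (P : ProjectiveResolution Z) :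
    P.complex.d 1 0 ≫ augmentation P = 0 :=
  P.complex_d_comp_π_f_zero

lemma exact_d_augmentation {Z : C} (P : ProjectiveResolution Z) :
    (ShortComplex.mk _ _ (d_comp_augmentation P)).Exact :=
  P.exact₀

lemma lift_f_zero_comp_augmentation {Y Z : C} (f : Y ⟶ Z)
    (P : ProjectiveResolution Y) (Q : ProjectiveResolution Z) :
    (ProjectiveResolution.lift f P Q).f 0 ≫ augmentation Q = augmentation P ≫ f := by
  refine (congr_arg (fun φ => HomologicalComplex.Hom.f φ 0)
    (ProjectiveResolution.lift_commutes f P Q)).trans ?_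
  rw [HomologicalComplex.comp_f, ChainComplex.single₀_map_f_zero]
  rfl

/-- For `S : X₁ ⟶ X₂ ⟶ X₃` and a projective resolution `Q` of `X₁`, the complex
`⋯ ⟶ Q₁ ⟶ Q₀ ⟶ X₂` with `X₂` in degree `0`. -/
def spliceComplex (S : ShortComplex C) (Q : ProjectiveResolution S.X₁) : ChainComplex C ℕ :=
  Q.complex.augment (augmentation Q ≫ S.f)
    (by rw [← Category.assoc, d_comp_augmentation, zero_comp])

variable {S T : ShortComplex C}

lemma spliceComplex_exactAt_succ [Mono S.f] (Q : ProjectiveResolution S.X₁) (n : ℕ) :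
    (spliceComplex S Q).ExactAt (n + 1) := by
  rw [HomologicalComplex.exactAt_iff' _ (n + 2) (n + 1) n (by simp) (by simp)]
  cases n with
  | zero =>
    let φ : ShortComplex.mk _ _ (d_comp_augmentation Q) ⟶ (spliceComplex S Q).sc' 2 1 0 :=
      { τ₁ := 𝟙 (Q.complex.X 1), τ₂ := 𝟙 (Q.complex.X 0), τ₃ := S.f
        comm₁₂ := (Category.id_comp (Q.complex.d 1 0)).trans (Category.comp_id _).symm
        comm₂₃ := Category.id_comp (augmentation Q ≫ S.f) }
    have : Epi φ.τ₁ := inferInstanceAs (Epi (𝟙 (Q.complex.X 1)))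
    have : IsIso φ.τ₂ := inferInstanceAs (IsIso (𝟙 (Q.complex.X 0)))
    have : Mono φ.τ₃ := inferInstanceAs (Mono S.f)
    exact (ShortComplex.exact_iff_of_epi_of_isIso_of_mono φ).1 (exact_d_augmentation Q)
  | succ n => exact Q.exact_succ n

lemma quasiIsoAt_zero_toSingle₀Equiv_symm {K : ChainComplex C ℕ} {X : C} (f : K.X 0 ⟶ X) [Epi f]
    (hf : K.d 1 0 ≫ f = 0) (hexact : (ShortComplex.mk _ _ hf).Exact) :
    QuasiIsoAt ((ChainComplex.toSingle₀Equiv K X).symm ⟨f, hf⟩) 0 := by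
  rw [ChainComplex.quasiIsoAt₀_iff,
    ShortComplex.quasiIso_iff_of_zeros' _ (K.shape _ _ (by simp)) rfl rfl]
  have hτ : ((ChainComplex.toSingle₀Equiv K X).symm ⟨f, hf⟩).f 0 = f :=
    ChainComplex.toSingle₀Equiv_symm_apply_f_zero f hf
  have e : ShortComplex.mk _ _ hf ≅ ShortComplex.mk (K.d 1 0)
      (((ChainComplex.toSingle₀Equiv K X).symm ⟨f, hf⟩).f 0) (by rw [hτ]; exact hf) :=
    ShortComplex.isoMk (Iso.refl _) (Iso.refl _) (Iso.refl _)
      ((Category.id_comp _).trans (Category.comp_id _).symm)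
      ((Category.id_comp _).trans (hτ.trans (Category.comp_id f).symm))
  exact (ShortComplex.exact_and_epi_g_iff_of_iso e).1 ⟨hexact, inferInstance⟩

lemma spliceComplex_d_comp_g (Q : ProjectiveResolution S.X₁) :
    (spliceComplex S Q).d 1 0 ≫ S.g = 0 :=
  show (augmentation Q ≫ S.f) ≫ S.g = 0 by rw [Category.assoc, S.zero, comp_zero]

lemma spliceComplex_exact_g (Q : ProjectiveResolution S.X₁) (hS : S.Exact) :
    (ShortComplex.mk _ _ (spliceComplex_d_comp_g Q)).Exact := by
  let φ : ShortComplex.mk _ _ (spliceComplex_d_comp_g Q) ⟶ S :=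
    { τ₁ := augmentation Q, τ₂ := 𝟙 S.X₂, τ₃ := 𝟙 S.X₃
      comm₁₂ := (Category.comp_id (augmentation Q ≫ S.f)).symm
      comm₂₃ := (Category.id_comp S.g).trans (Category.comp_id S.g).symm }
  have : Epi φ.τ₁ := inferInstanceAs (Epi (augmentation Q))
  have : IsIso φ.τ₂ := inferInstanceAs (IsIso (𝟙 S.X₂))
  have : Mono φ.τ₃ := inferInstanceAs (Mono (𝟙 S.X₃))
  exact (ShortComplex.exact_iff_of_epi_of_isIso_of_mono φ).2 hS

/-- The projective resolution of `X₃` obtained by splicing a resolution of the syzygy `X₁` into a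
short exact sequence `X₁ ⟶ X₂ ⟶ X₃` with `X₂` projective. -/
def spliceResolution (hS : S.ShortExact) [Projective S.X₂] (Q : ProjectiveResolution S.X₁) :
    ProjectiveResolution S.X₃ where
  complex := spliceComplex S Q
  projective
    | 0 => inferInstanceAs (Projective S.X₂)
    | n + 1 => Q.projective n
  π := (ChainComplex.toSingle₀Equiv _ _).symm ⟨S.g, spliceComplex_d_comp_g Q⟩
  quasiIso := ⟨fun
    | 0 => by
      have : Epi (X := (spliceComplex S Q).X 0) S.g := hS.epi_g
      exact quasiIsoAt_zero_toSingle₀Equiv_symm (K := spliceComplex S Q) S.g _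
        (spliceComplex_exact_g Q hS.exact)
    | n + 1 => by
      have := hS.mono_f
      rw [quasiIsoAt_iff_exactAt' _ _ (ChainComplex.exactAt_succ_single_obj _ n)]
      exact spliceComplex_exactAt_succ Q n⟩

/-- The map of spliced complexes induced by a map of short complexes. -/
def spliceComplexMap (φ : S ⟶ T) (Q : ProjectiveResolution S.X₁)
    (Q' : ProjectiveResolution T.X₁) : spliceComplex S Q ⟶ spliceComplex T Q' where
  f
    | 0 => φ.τ₂
    | n + 1 => (ProjectiveResolution.lift φ.τ₁ Q Q').f n
  comm' := by
    rintro _ j rfl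
    cases j with
    | zero =>
      change _ ≫ augmentation Q' ≫ T.f = (augmentation Q ≫ S.f) ≫ φ.τ₂
      rw [← Category.assoc, lift_f_zero_comp_augmentation, Category.assoc, φ.comm₁₂,
        Category.assoc]
    | succ n => exact (ProjectiveResolution.lift φ.τ₁ Q Q').comm _ _

lemma spliceComplexMap_comp_π (hS : S.ShortExact) (hT : T.ShortExact) [Projective S.X₂]
    [Projective T.X₂] (φ : S ⟶ T) (Q : ProjectiveResolution S.X₁)
    (Q' : ProjectiveResolution T.X₁) :
    (spliceComplexMap φ Q Q').f 0 ≫ (spliceResolution hT Q').π.f 0 =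
      (spliceResolution hS Q).π.f 0 ≫ φ.τ₃ := by
  have hπ {S : ShortComplex C} (hS : S.ShortExact) [Projective S.X₂]
      (Q : ProjectiveResolution S.X₁) : (spliceResolution hS Q).π.f 0 = S.g :=
    ChainComplex.toSingle₀Equiv_symm_apply_f_zero (C := spliceComplex S Q) S.g _
  exact (congr_arg (φ.τ₂ ≫ ·) (hπ hT Q')).trans
    (φ.comm₂₃.trans (congr_arg (· ≫ φ.τ₃) (hπ hS Q)).symm)

variable {D : Type u'} [Category.{v'} D] [Abelian D]

/-- The map `H₁(K) ⟶ A` induced by a map `K₁ ⟶ A` that vanishes on boundaries. -/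
def homologyOneDesc (K : ChainComplex D ℕ) {A : D} (ε : K.X 1 ⟶ A) (hε : K.d 2 1 ≫ ε = 0) :
    K.homology 1 ⟶ A :=
  K.homologyι 1 ≫ K.descOpcycles ε 2 (by simp) hε

section

variable {K L : ChainComplex D ℕ} {A B : D} {ε : K.X 1 ⟶ A} (hε : K.d 2 1 ≫ ε = 0)

lemma homologyOneDesc_naturality {η : L.X 1 ⟶ B} (hη : L.d 2 1 ≫ η = 0) {φ : K ⟶ L} {α : A ⟶ B}
    (h : φ.f 1 ≫ η = ε ≫ α) :
    HomologicalComplex.homologyMap φ 1 ≫ homologyOneDesc L η hη = homologyOneDesc K ε hε ≫ α := by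
  have hdesc : HomologicalComplex.opcyclesMap φ 1 ≫ L.descOpcycles η 2 (by simp) hη =
      K.descOpcycles ε 2 (by simp) hε ≫ α := by
    simp [← cancel_epi (K.pOpcycles 1), h]
  rw [homologyOneDesc, homologyOneDesc, HomologicalComplex.homologyι_naturality_assoc, hdesc,
    Category.assoc]

lemma homologyOneDesc_comp {ι : A ⟶ K.X 0} (hι : ε ≫ ι = K.d 1 0) :
    homologyOneDesc K ε hε ≫ ι = 0 := by
  have hdesc : K.descOpcycles ε 2 (by simp) hε ≫ ι = K.fromOpcycles 1 0 := by
    simp [← cancel_epi (K.pOpcycles 1), hι]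
  rw [homologyOneDesc, Category.assoc, hdesc, HomologicalComplex.homologyι_comp_fromOpcycles]

lemma isIso_descOpcycles_one (hepi : Epi ε) (hexact : (ShortComplex.mk _ _ hε).Exact) :
    IsIso (K.descOpcycles ε 2 (by simp) hε) := by
  have : Epi (ShortComplex.mk _ _ hε).g := hepi
  obtain ⟨σ, hσ⟩ : ∃ σ : A ⟶ K.opcycles 1, ε ≫ σ = K.pOpcycles 1 :=
    ⟨hexact.desc _ (K.d_pOpcycles 2 1), hexact.g_desc _ _⟩
  exact ⟨σ, by simp [← cancel_epi (K.pOpcycles 1), hσ],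
    by simp [← cancel_epi ε, ← Category.assoc, hσ]⟩

lemma mono_homologyOneDesc (hepi : Epi ε) (hexact : (ShortComplex.mk _ _ hε).Exact) :
    Mono (homologyOneDesc K ε hε) := by
  have := isIso_descOpcycles_one hε hepi hexact
  exact mono_comp _ _

lemma exact_homologyOneDesc (hepi : Epi ε) (hexact : (ShortComplex.mk _ _ hε).Exact)
    {ι : A ⟶ K.X 0} (hι : ε ≫ ι = K.d 1 0) :
    (ShortComplex.mk _ _ (homologyOneDesc_comp hε hι)).Exact := by
  have := isIso_descOpcycles_one hε hepi hexact
  have hkernel : (ShortComplex.mk _ _ (K.homologyι_comp_fromOpcycles 1 0)).Exact :=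
    ShortComplex.exact_of_f_is_kernel _ (K.homologyIsKernel 1 0 (ChainComplex.next_nat_succ 0))
  have e : ShortComplex.mk _ _ (K.homologyι_comp_fromOpcycles 1 0) ≅
      ShortComplex.mk _ _ (homologyOneDesc_comp hε hι) :=
    ShortComplex.isoMk (Iso.refl _) (asIso (K.descOpcycles ε 2 _ hε)) (Iso.refl _)
      (by simp [homologyOneDesc]) (by simp [← cancel_epi (K.pOpcycles 1), hι])
  exact ShortComplex.exact_of_iso e hkernel

end

variable (F : C ⥤ D) [F.Additive]

lemma map_d_comp_map_augmentation {Z : C} (P : ProjectiveResolution Z) :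
    F.map (P.complex.d 1 0) ≫ F.map (augmentation P) = 0 := by
  rw [← F.map_comp, d_comp_augmentation, F.map_zero]

lemma exact_map_augmentation [PreservesFiniteColimits F] {Z : C} (P : ProjectiveResolution Z) :
    (ShortComplex.mk _ _ (map_d_comp_map_augmentation F P)).Exact :=
  ((F.preservesFiniteColimits_tfae.out 3 1 :).1 inferInstance _
    ⟨exact_d_augmentation P, inferInstanceAs (Epi (augmentation P))⟩).1

variable [EnoughProjectives C] (hS : S.ShortExact) [Projective S.X₂]

/-- The connecting map `L₁F(X₃) ⟶ F(X₁)` of a short exact sequence `X₁ ⟶ X₂ ⟶ X₃` with `X₂`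
projective, computed on the spliced resolution of `X₃`. -/
def leftDerivedOneToSyzygy : (F.leftDerived 1).obj S.X₃ ⟶ F.obj S.X₁ :=
  ((spliceResolution hS (projectiveResolution S.X₁)).isoLeftDerivedObj F 1).hom ≫
    homologyOneDesc ((F.mapHomologicalComplex _).obj (spliceComplex S (projectiveResolution S.X₁)))
      (F.map (augmentation (projectiveResolution S.X₁))) (map_d_comp_map_augmentation F _)

lemma leftDerivedOneToSyzygy_naturality (hT : T.ShortExact) [Projective T.X₂] (φ : S ⟶ T) :
    (F.leftDerived 1).map φ.τ₃ ≫ leftDerivedOneToSyzygy F hT =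
      leftDerivedOneToSyzygy F hS ≫ F.map φ.τ₁ := by
  have hiso := ProjectiveResolution.isoLeftDerivedObj_hom_naturality φ.τ₃
    (spliceResolution hS (projectiveResolution S.X₁))
    (spliceResolution hT (projectiveResolution T.X₁)) (spliceComplexMap φ _ _)
    (spliceComplexMap_comp_π hS hT φ _ _) F 1
  have hdesc := homologyOneDesc_naturality
    (K := (F.mapHomologicalComplex _).obj (spliceComplex S (projectiveResolution S.X₁)))
    (L := (F.mapHomologicalComplex _).obj (spliceComplex T (projectiveResolution T.X₁)))
    (map_d_comp_map_augmentation F _) (map_d_comp_map_augmentation F _)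
    (φ := (F.mapHomologicalComplex _).map (spliceComplexMap φ _ _)) (α := F.map φ.τ₁)
    ((F.map_comp _ _).symm.trans ((congr_arg F.map (lift_f_zero_comp_augmentation φ.τ₁
      (projectiveResolution S.X₁) (projectiveResolution T.X₁))).trans (F.map_comp _ _)))
  refine ((Category.assoc _ _ _).symm.trans (congr_arg (· ≫ _) hiso)).trans ?_
  exact ((Category.assoc _ _ _).trans (congr_arg (_ ≫ ·) hdesc)).trans (Category.assoc _ _ _).symm

lemma leftDerivedOneToSyzygy_comp : leftDerivedOneToSyzygy F hS ≫ F.map S.f = 0 :=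
  (Category.assoc _ _ _).trans <| (congr_arg (_ ≫ ·)
    (homologyOneDesc_comp _ (F.map_comp _ _).symm)).trans comp_zero

variable [PreservesFiniteColimits F]

lemma mono_leftDerivedOneToSyzygy : Mono (leftDerivedOneToSyzygy F hS) :=
  have := mono_homologyOneDesc
    (K := (F.mapHomologicalComplex _).obj (spliceComplex S (projectiveResolution S.X₁)))
    (map_d_comp_map_augmentation F _) (inferInstanceAs (Epi (F.map (augmentation _))))
    (exact_map_augmentation F _)
  @mono_comp _ _ _ _ _ _ inferInstance _ this

lemma exact_leftDerivedOneToSyzygy :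
    (ShortComplex.mk _ _ (leftDerivedOneToSyzygy_comp F hS)).Exact := by
  let K := (F.mapHomologicalComplex _).obj (spliceComplex S (projectiveResolution S.X₁))
  have hexact := exact_homologyOneDesc (K := K) (map_d_comp_map_augmentation F _)
    (inferInstanceAs (Epi (F.map (augmentation _)))) (exact_map_augmentation F _)
    (ι := F.map S.f) (F.map_comp _ _).symm
  have e : ShortComplex.mk _ _ (leftDerivedOneToSyzygy_comp F hS) ≅
      ShortComplex.mk _ _ (homologyOneDesc_comp (K := K) (map_d_comp_map_augmentation F _)
        (ι := F.map S.f) (F.map_comp _ _).symm) :=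
    ShortComplex.isoMk
      ((spliceResolution hS (projectiveResolution S.X₁)).isoLeftDerivedObj F 1)
      (Iso.refl (F.obj S.X₁)) (Iso.refl (F.obj S.X₂))
      (Category.comp_id (leftDerivedOneToSyzygy F hS)).symm
      ((Category.id_comp (F.map S.f)).trans (Category.comp_id (F.map S.f)).symm)
  exact ShortComplex.exact_of_iso e.symm hexact

end SyzygySequence

section LocalCohomologyOne

open CategoryTheory Limits Opposite

universe u

variable {R : Type u} [CommRing R]

/-- `Hom(-, M)` as a covariant functor to the opposite category: `Ext R _ n` is defined through the
`n`-th left derived functor of this functor. -/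
abbrev homRightOp (M : ModuleCat.{u} R) : ModuleCat.{u} R ⥤ (ModuleCat.{u} R)ᵒᵖ :=
  ((linearYoneda R (ModuleCat.{u} R)).obj M).rightOp

instance preservesFiniteColimits_homRightOp (M : ModuleCat.{u} R) :
    PreservesFiniteColimits (homRightOp M) := by
  have : PreservesLimits ((linearYoneda R (ModuleCat.{u} R)).obj M ⋙ forget _) :=
    inferInstanceAs (PreservesLimits (yoneda.obj M))
  have : PreservesLimits ((linearYoneda R (ModuleCat.{u} R)).obj M) :=
    preservesLimits_of_reflects_of_preserves _ (forget _)
  have : PreservesFiniteLimits ((linearYoneda R (ModuleCat.{u} R)).obj M) :=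
    PreservesLimits.preservesFiniteLimits _
  exact preservesFiniteColimits_rightOp _

/-- The sequence `I → R → R ⧸ I` attached to an ideal. -/
abbrev idealSequence (I : Ideal R) : ShortComplex (ModuleCat.{u} R) :=
  .mk (ModuleCat.ofHom I.subtype) (ModuleCat.ofHom I.mkQ)
    (by ext r; exact (Submodule.Quotient.mk_eq_zero I).2 r.2)

lemma idealSequence_shortExact (I : Ideal R) : (idealSequence I).ShortExact where
  exact := (ShortComplex.moduleCat_exact_iff _).2 fun r hr =>
    ⟨⟨r, (Submodule.Quotient.mk_eq_zero I).1 hr⟩, rfl⟩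
  mono_f := (ModuleCat.mono_iff_injective _).2 I.injective_subtype
  epi_g := (ModuleCat.epi_iff_surjective _).2 I.mkQ_surjective

/-- The map of sequences attached to an inclusion of ideals; it is the identity on `R`. -/
abbrev idealSequenceMap {I I' : Ideal R} (h : I ≤ I') : idealSequence I ⟶ idealSequence I' where
  τ₁ := ModuleCat.ofHom (Submodule.inclusion h)
  τ₂ := 𝟙 _
  τ₃ := ModuleCat.ofHom (Submodule.mapQ I I' LinearMap.id h)

/-- The module `Extⁿ(R ⧸ I, M)`. -/
abbrev extQuotient (n : ℕ) (I : Ideal R) (M : ModuleCat.{u} R) : ModuleCat.{u} R :=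
  ((Ext R (ModuleCat.{u} R) n).obj (op (ModuleCat.of R (R ⧸ I)))).obj M

/-- The restriction map `Extⁿ(R ⧸ I', M) ⟶ Extⁿ(R ⧸ I, M)` for `I ≤ I'`. -/
abbrev extQuotientMap (n : ℕ) {I I' : Ideal R} (h : I ≤ I') (M : ModuleCat.{u} R) :
    extQuotient n I' M ⟶ extQuotient n I M :=
  ((Ext R (ModuleCat.{u} R) n).map
    (ModuleCat.ofHom (Submodule.mapQ I I' LinearMap.id h)).op).app M

variable {I I' : Ideal R} {M : ModuleCat.{u} R}

/-- The connecting map `Hom(I, M) → Ext¹(R ⧸ I, M)`. -/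
def homToExtOne (φ : I →ₗ[R] M) : extQuotient 1 I M :=
  (leftDerivedOneToSyzygy (homRightOp M) (idealSequence_shortExact I)).unop.hom (ModuleCat.ofHom φ)

lemma homToExtOne_surjective : Function.Surjective (homToExtOne : (I →ₗ[R] M) → _) := by
  intro e
  have := mono_leftDerivedOneToSyzygy (homRightOp M) (idealSequence_shortExact I)
  obtain ⟨φ, hφ⟩ := (ModuleCat.epi_iff_surjective (leftDerivedOneToSyzygy (homRightOp M)
    (idealSequence_shortExact I)).unop).1 inferInstance e
  exact ⟨ModuleCat.Hom.hom φ, hφ⟩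

lemma homToExtOne_eq_zero_iff {φ : I →ₗ[R] M} :
    homToExtOne φ = 0 ↔ ∃ x : M, ∀ r : I, φ r = (r : R) • x := by
  have hexact := (ShortComplex.ShortExact.moduleCat_exact_iff_function_exact _).1
    (exact_leftDerivedOneToSyzygy (homRightOp M) (idealSequence_shortExact I)).unop
  refine (hexact (ModuleCat.ofHom φ)).trans ⟨?_, ?_⟩
  · rintro ⟨ψ, hψ⟩
    refine ⟨ModuleCat.Hom.hom ψ (1 : R), fun r => ?_⟩
    have hr : φ r = ModuleCat.Hom.hom ψ (r : R) :=
      (LinearMap.congr_fun (congr_arg ModuleCat.Hom.hom hψ) r).symm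
    rw [hr, ← map_smul, smul_eq_mul, mul_one]
  · rintro ⟨x, hx⟩
    exact ⟨ModuleCat.ofHom (LinearMap.toSpanSingleton R M x),
      ModuleCat.hom_ext (LinearMap.ext fun r => (hx r).symm)⟩

lemma extQuotientMap_homToExtOne (h : I ≤ I') (φ : I' →ₗ[R] M) :
    (extQuotientMap 1 h M).hom (homToExtOne φ) = homToExtOne (φ ∘ₗ Submodule.inclusion h) :=
  congr_arg (fun f => f.unop.hom (ModuleCat.ofHom φ))
    (leftDerivedOneToSyzygy_naturality (homRightOp M) (idealSequence_shortExact I)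
      (idealSequence_shortExact I') (idealSequenceMap h))

variable {J : Ideal R} {s : ℕ}

/-- A homomorphism `J ^ s → M` agrees on some power of `J` with multiplication by an element of
`M`; these are the homomorphisms whose class in `H¹_J(M)` vanishes. -/
def IsEventuallyMul {M : Type*} [AddCommGroup M] [Module R M] (φ : ↥(J ^ s) →ₗ[R] M) : Prop :=
  ∃ x : M, ∃ N, ∀ r : ↥(J ^ s), (r : R) ∈ J ^ N → φ r = (r : R) • x

lemma isEventuallyMul_iff_exists_homToExtOne_eq_zero (φ : ↥(J ^ s) →ₗ[R] M) :
    IsEventuallyMul φ ↔ ∃ N, ∃ h : s ≤ N,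
      homToExtOne (φ ∘ₗ Submodule.inclusion (Ideal.pow_le_pow_right (I := J) h)) = 0 := by
  simp only [homToExtOne_eq_zero_iff]
  constructor
  · rintro ⟨x, N, hx⟩
    exact ⟨max s N, le_max_left s N, x,
      fun r => hx _ (Ideal.pow_le_pow_right (le_max_right s N) r.2)⟩
  · rintro ⟨N, h, x, hx⟩
    exact ⟨x, N, fun r hr => hx ⟨r, hr⟩⟩

variable (J)

/-- The structure map `Extⁿ(R ⧸ J ^ s, M) ⟶ Hⁿ_J(M)`. -/
def localCohomologyι (n s : ℕ) (M : ModuleCat.{u} R) :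
    extQuotient n (J ^ s) M ⟶ (localCohomology J n).obj M :=
  haveI := localCohomology.hasColimitDiagram.{u, 0} (localCohomology.idealPowersDiagram J) n
  (colimit.ι (localCohomology.diagram (localCohomology.idealPowersDiagram J) n) (op (op s))).app M

/-- `Hⁿ_J(M)` is the colimit of the modules `Extⁿ(R ⧸ J ^ s, M)`. -/
def localCohomologyIsColimit (n : ℕ) (M : ModuleCat.{u} R) :
    haveI := localCohomology.hasColimitDiagram.{u, 0} (localCohomology.idealPowersDiagram J) n
    IsColimit (((evaluation (ModuleCat.{u} R) (ModuleCat.{u} R)).obj M).mapCocone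
      (colimit.cocone (localCohomology.diagram (localCohomology.idealPowersDiagram J) n))) :=
  haveI := localCohomology.hasColimitDiagram.{u, 0} (localCohomology.idealPowersDiagram J) n
  isColimitOfPreserves _ (colimit.isColimit _)

variable {J}

lemma localCohomologyι_jointly_surjective {n : ℕ} (ξ : (localCohomology J n).obj M) :
    ∃ s e, (localCohomologyι J n s M).hom e = ξ := by
  have := preservesFilteredColimitsOfSize_shrink.{0, u, 0, u} (forget (ModuleCat.{u} R))
  obtain ⟨s, e, he⟩ := Concrete.isColimit_exists_rep _ (localCohomologyIsColimit J n M) ξ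
  exact ⟨s.unop.unop, e, he⟩

lemma localCohomologyι_eq_zero_iff {n : ℕ} (e : extQuotient n (J ^ s) M) :
    (localCohomologyι J n s M).hom e = 0 ↔
      ∃ N, ∃ h : s ≤ N, (extQuotientMap n (Ideal.pow_le_pow_right (I := J) h) M).hom e = 0 := by
  have := preservesFilteredColimitsOfSize_shrink.{0, u, 0, u} (forget (ModuleCat.{u} R))
  have heq := Concrete.isColimit_rep_eq_iff_exists.{u} _ (localCohomologyIsColimit J n M)
    (i := op (op s)) (j := op (op s)) e (0 : extQuotient n (J ^ s) M)
  have hzero := map_zero (localCohomologyι J n s M).hom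
  constructor
  · intro h
    obtain ⟨N, f, _, hN⟩ := heq.1 (h.trans hzero.symm)
    exact ⟨N.unop.unop, f.unop.unop.down.down, hN.trans (map_zero _)⟩
  · rintro ⟨N, h, hN⟩
    exact (heq.2 ⟨op (op N), (homOfLE h).op.op, (homOfLE h).op.op,
      hN.trans (map_zero _).symm⟩).trans hzero

theorem nontrivial_localCohomology_one_iff :
    Nontrivial ((localCohomology J 1).obj M) ↔
      ∃ (s : ℕ) (φ : ↥(J ^ s) →ₗ[R] M), ¬ IsEventuallyMul φ := by
  have hzero (s : ℕ) (φ : ↥(J ^ s) →ₗ[R] M) :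
      (localCohomologyι J 1 s M).hom (homToExtOne φ) = 0 ↔ IsEventuallyMul φ := by
    simp only [localCohomologyι_eq_zero_iff, isEventuallyMul_iff_exists_homToExtOne_eq_zero,
      extQuotientMap_homToExtOne]
  constructor
  · intro h
    obtain ⟨ξ, hξ⟩ := exists_ne (0 : (localCohomology J 1).obj M)
    obtain ⟨s, e, rfl⟩ := localCohomologyι_jointly_surjective ξ
    obtain ⟨φ, rfl⟩ := homToExtOne_surjective e
    exact ⟨s, φ, mt (hzero s φ).2 hξ⟩
  · rintro ⟨s, φ, hφ⟩
    exact ⟨_, _, mt (hzero s φ).1 hφ⟩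

end LocalCohomologyOne

lemma isEventuallyMul_of_forall_generator {R ι M : Type*} [CommRing R] [Finite ι] [AddCommGroup M]
    [Module R M] {g : ι → R} {s : ℕ} (φ : ↥(Ideal.span (Set.range g) ^ s) →ₗ[R] M) (x : M)
    (h : ∀ i, ∃ N, ∃ r : ↥(Ideal.span (Set.range g) ^ s), (r : R) = g i ^ N ∧ φ r = (r : R) • x) :
    IsEventuallyMul φ := by
  let ψ : ↥(Ideal.span (Set.range g) ^ s) →ₗ[R] M :=
    LinearMap.toSpanSingleton R M x ∘ₗ Submodule.subtype _
  let T : Ideal R := (LinearMap.eqLocus φ ψ).map (Submodule.subtype _)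
  have hrad : Ideal.span (Set.range g) ≤ T.radical := by
    refine Ideal.span_le.2 ?_
    rintro _ ⟨i, rfl⟩
    obtain ⟨N, r, hr, hφ⟩ := h i
    exact ⟨N, r, hφ, hr⟩
  obtain ⟨N, hN⟩ := Ideal.exists_pow_le_of_le_radical_of_fg hrad
    (Submodule.fg_span (Set.finite_range g))
  refine ⟨x, N, fun r hr => ?_⟩
  obtain ⟨q, hq, hqr⟩ := hN hr
  obtain rfl : q = r := Subtype.ext hqr
  exact hq

section MonomialIdeal

variable {σ k : Type*} [CommRing k]

/-- `J` is a monomial ideal: it contains every monomial occurring in one of its elements. -/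
def IsMonomialIdeal (J : Ideal (MvPolynomial σ k)) : Prop :=
  ∀ f ∈ J, ∀ b ∈ f.support, monomial b 1 ∈ J

lemma isMonomialIdeal_span_monomial (A : Set (σ →₀ ℕ)) :
    IsMonomialIdeal (Ideal.span ((fun a => monomial a (1 : k)) '' A)) := by
  intro f hf b hb
  rw [mem_ideal_span_monomial_image] at hf ⊢
  intro c hc
  obtain rfl : c = b := Finset.mem_singleton.1 (support_monomial_subset hc)
  exact hf c hb

lemma IsMonomialIdeal.mul {I J : Ideal (MvPolynomial σ k)} (hI : IsMonomialIdeal I)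
    (hJ : IsMonomialIdeal J) : IsMonomialIdeal (I * J) := by
  classical
  intro f hf
  refine Submodule.mul_induction_on hf (fun p hp q hq b hb => ?_) fun p q hp hq b hb => ?_
  · obtain ⟨c, hc, d, hd, rfl⟩ := Finset.mem_add.1 (support_mul p q hb)
    rw [← one_mul (1 : k), ← monomial_mul]
    exact Ideal.mul_mem_mul (hI p hp c hc) (hJ q hq d hd)
  · exact (Finset.mem_union.1 (support_add hb)).elim (hp b) (hq b)

lemma IsMonomialIdeal.pow {I : Ideal (MvPolynomial σ k)} (hI : IsMonomialIdeal I) :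
    ∀ t : ℕ, IsMonomialIdeal (I ^ t)
  | 0 => fun f _ b _ => by simp
  | t + 1 => pow_succ I t ▸ (hI.pow t).mul hI

lemma monomial_add_mem_pow {b c : σ →₀ ℕ} {I : Ideal (MvPolynomial σ k)} {s t : ℕ}
    (hb : monomial b 1 ∈ I ^ s) (hc : monomial c 1 ∈ I ^ t) : monomial (b + c) 1 ∈ I ^ (s + t) := by
  rw [← one_mul (1 : k), ← monomial_mul, pow_add]
  exact Ideal.mul_mem_mul hb hc

/-- The faces `F` of the degree complex `Δ_a(J)`: inverting the variables in `F` does not bring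
`x^a` into the monomial ideal `J`. As `x^a` lies in `J·R[x_i⁻¹ : i ∈ F]` exactly if `J` contains
some `x^b` with `b ≤ a` outside `F`, no localization is needed to say so. -/
def degreeFaces (J : Ideal (MvPolynomial σ k)) (a : σ →₀ ℕ) : Set (Finset σ) :=
  {F | ∀ b : σ →₀ ℕ, (∀ v ∉ F, b v ≤ a v) → monomial b 1 ∉ J}

variable {J : Ideal (MvPolynomial σ k)} {a b : σ →₀ ℕ} {F G : Finset σ}

lemma mem_degreeFaces_of_subset (hG : G ∈ degreeFaces J a) (h : F ⊆ G) : F ∈ degreeFaces J a :=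
  fun b hb => hG b fun v hv => hb v (mt (@h v) hv)

lemma mem_degreeFaces_of_le (hF : F ∈ degreeFaces J b) (h : ∀ v ∉ F, a v ≤ b v) :
    F ∈ degreeFaces J a :=
  fun c hc => hF c fun v hv => (hc v hv).trans (h v hv)

lemma IsMonomialIdeal.coeff_eq_zero (hJ : IsMonomialIdeal J) {f : MvPolynomial σ k} (hf : f ∈ J)
    (hF : F ∈ degreeFaces J a) (h : ∀ v ∉ F, b v ≤ a v) : coeff b f = 0 := by
  by_contra hb
  exact hF b h (hJ f hf b (mem_support_iff.2 hb))

lemma monomial_mem_of_le (hb : monomial b 1 ∈ J) (h : b ≤ a) (c : k) : monomial a c ∈ J := by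
  rw [← tsub_add_cancel_of_le h, ← mul_one c, ← monomial_mul]
  exact J.mul_mem_left _ hb

lemma exists_X_pow_mul_mem {i : σ} {f : MvPolynomial σ k}
    (hf : ∀ b ∈ f.support, {i} ∉ degreeFaces J b) : ∃ N, X i ^ N * f ∈ J := by
  classical
  simp only [degreeFaces, Set.mem_ofPred_eq, Finset.mem_singleton, not_forall, not_not] at hf
  choose! c hcb hcJ using hf
  refine ⟨f.support.sup fun b => c b i, ?_⟩
  rw [f.as_sum, Finset.mul_sum, ← f.as_sum]
  refine J.sum_mem fun b hb => ?_
  rw [X_pow_eq_monomial, monomial_mul]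
  refine monomial_mem_of_le (hcJ b hb) (fun v => ?_) _
  by_cases hv : v = i
  · subst hv
    have := Finset.le_sup (f := fun b => c b v) hb
    simpa using this.trans le_self_add
  · simpa [hv] using hcb b hb v hv

lemma coeff_add_single_X_pow_mul (b : σ →₀ ℕ) (i : σ) (s : ℕ) (f : MvPolynomial σ k) :
    coeff (b + Finsupp.single i s) (X i ^ s * f) = coeff b f := by
  rw [X_pow_eq_monomial, add_comm, coeff_monomial_mul, one_mul]

lemma coeff_X_pow_mul_of_lt {b : σ →₀ ℕ} {i : σ} {s : ℕ} (h : b i < s) (f : MvPolynomial σ k) :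
    coeff b (X i ^ s * f) = 0 := by
  rw [X_pow_eq_monomial, coeff_monomial_mul', if_neg (by simpa using h)]

end MonomialIdeal

lemma eq_of_not_complexDisconnected {σ : Type} {β : Type*} [DecidableEq σ] {Δ : Set (Finset σ)}
    (hsub : ∀ F ∈ Δ, ∀ G ⊆ F, G ∈ Δ) (hΔ : ¬ ComplexDisconnected Δ) {c : σ → β}
    (hc : ∀ i j, {i, j} ∈ Δ → c i = c j) {i j : σ} (hi : {i} ∈ Δ) (hj : {j} ∈ Δ) : c i = c j := by
  by_contra hne
  refine hΔ ⟨{v | {v} ∈ Δ ∧ c v = c i}, {v | {v} ∈ Δ ∧ c v ≠ c i}, ⟨i, hi, rfl⟩,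
    ⟨j, hj, Ne.symm hne⟩, Set.disjoint_left.2 fun v hv hv' => hv'.2 hv.2, fun v => ?_, ?_⟩
  · simp only [Set.mem_union, Set.mem_ofPred_eq, ← and_or_left, em, and_true]
  · rintro F hF ⟨⟨u, huF, -, hu⟩, v, hvF, -, hv⟩
    refine hv (Eq.trans ?_ hu)
    exact (hc u v (hsub F hF _ (by simp [Finset.insert_subset_iff, huF, hvF]))).symm

lemma X_pow_mem_span_range_X_pow {σ k : Type*} [CommRing k] (i : σ) (s : ℕ) :
    (X i : MvPolynomial σ k) ^ s ∈ Ideal.span (Set.range X) ^ s :=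
  Ideal.pow_mem_pow (Ideal.subset_span (Set.mem_range_self i)) s

section VanishingCriterion

variable {σ : Type} {k : Type*} [CommRing k] {J : Ideal (MvPolynomial σ k)}
  {s : ℕ} {a : σ →₀ ℕ} {i j : σ}

lemma coeff_eq_of_pair_mem [DecidableEq σ] (hJ : IsMonomialIdeal J)
    (hij : {i, j} ∈ degreeFaces J a) {f g : MvPolynomial σ k} (h : X j ^ s * f - X i ^ s * g ∈ J) :
    coeff (a + Finsupp.single i s) f = coeff (a + Finsupp.single j s) g := by
  have hzero := hJ.coeff_eq_zero h hij (b := a + Finsupp.single i s + Finsupp.single j s)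
    fun v hv => by
      simp only [Finset.mem_insert, Finset.mem_singleton, not_or] at hv
      simp [hv.1, hv.2]
  rw [coeff_sub, coeff_add_single_X_pow_mul, add_right_comm, coeff_add_single_X_pow_mul] at hzero
  exact sub_eq_zero.1 hzero

lemma coeff_eq_zero_of_pair_mem [DecidableEq σ] (hJ : IsMonomialIdeal J)
    (hij : {i, j} ∈ degreeFaces J a) (hne : i ≠ j) (ha : a i < s) {f g : MvPolynomial σ k}
    (h : X j ^ s * f - X i ^ s * g ∈ J) : coeff a f = 0 := by
  have hzero := hJ.coeff_eq_zero h hij (b := a + Finsupp.single j s) fun v hv => by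
    simp only [Finset.mem_insert, Finset.mem_singleton, not_or] at hv
    simp [hv.2]
  rwa [coeff_sub, coeff_add_single_X_pow_mul, coeff_X_pow_mul_of_lt (by simpa [hne] using ha),
    sub_zero] at hzero

variable [Finite σ]

lemma exists_gluing (hJ : IsMonomialIdeal J)
    (hΔ : ∀ a, ¬ ComplexDisconnected (degreeFaces J a)) {y : σ → MvPolynomial σ k}
    (hy : ∀ i j, X j ^ s * y i - X i ^ s * y j ∈ J) :
    ∃ h : MvPolynomial σ k, ∀ a i, {i} ∈ degreeFaces J a →
      coeff a h = coeff (a + Finsupp.single i s) (y i) := by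
  classical
  have := Fintype.ofFinite σ
  have hconst (a : σ →₀ ℕ) : ∃ c : k, ∀ i, {i} ∈ degreeFaces J a →
      c = coeff (a + Finsupp.single i s) (y i) := by
    by_cases hvertex : ∃ j, {j} ∈ degreeFaces J a
    · obtain ⟨j, hj⟩ := hvertex
      exact ⟨_, fun i hi => eq_of_not_complexDisconnected
        (fun F hF G hGF => mem_degreeFaces_of_subset hF hGF) (hΔ a)
        (c := fun i => coeff (a + Finsupp.single i s) (y i))
        (fun i j hij => coeff_eq_of_pair_mem hJ hij (hy i j)) hj hi⟩
    · exact ⟨0, fun i hi => absurd ⟨i, hi⟩ hvertex⟩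
  choose c hc using hconst
  let S : Finset (σ →₀ ℕ) :=
    Finset.univ.biUnion fun i => (y i).support.image fun b => b - Finsupp.single i s
  have hS (a : σ →₀ ℕ) (i : σ) (ha : a ∉ S) : coeff (a + Finsupp.single i s) (y i) = 0 := by
    by_contra hne
    exact ha (Finset.mem_biUnion.2 ⟨i, Finset.mem_univ i, Finset.mem_image.2
      ⟨_, mem_support_iff.2 hne, add_tsub_cancel_right _ _⟩⟩)
  refine ⟨∑ a ∈ S, monomial a (c a), fun a i hi => ?_⟩
  simp only [coeff_sum, coeff_monomial, Finset.sum_ite_eq']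
  split_ifs with ha
  · exact hc a i hi
  · exact (hS a i ha).symm

lemma exists_X_pow_mul_sub_mem [DecidableEq σ] (hJ : IsMonomialIdeal J)
    (hΔ : ∀ a, ¬ ComplexDisconnected (degreeFaces J a))
    (hedge : ∀ a i, {i} ∈ degreeFaces J a → ∃ j, i ≠ j ∧ {i, j} ∈ degreeFaces J a)
    {y : σ → MvPolynomial σ k} (hy : ∀ i j, X j ^ s * y i - X i ^ s * y j ∈ J) :
    ∃ h : MvPolynomial σ k, ∀ i, ∃ N, X i ^ N * (y i - X i ^ s * h) ∈ J := by
  obtain ⟨h, hh⟩ := exists_gluing hJ hΔ hy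
  refine ⟨h, fun i => exists_X_pow_mul_mem fun b hb hi => mem_support_iff.1 hb ?_⟩
  rw [coeff_sub]
  rcases lt_or_ge (b i) s with hlt | hge
  · obtain ⟨j, hne, hij⟩ := hedge b i hi
    rw [coeff_X_pow_mul_of_lt hlt, coeff_eq_zero_of_pair_mem hJ hij hne hlt (hy i j), sub_zero]
  · obtain ⟨a, rfl⟩ : ∃ a, b = a + Finsupp.single i s :=
      ⟨_, (tsub_add_cancel_of_le (Finsupp.single_le_iff.2 hge)).symm⟩
    rw [coeff_add_single_X_pow_mul, hh a i (mem_degreeFaces_of_le hi fun v _ => le_self_add),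
      sub_self]

theorem isEventuallyMul_of_degreeFaces [DecidableEq σ] (hJ : IsMonomialIdeal J)
    (hΔ : ∀ a, ¬ ComplexDisconnected (degreeFaces J a))
    (hedge : ∀ a i, {i} ∈ degreeFaces J a → ∃ j, i ≠ j ∧ {i, j} ∈ degreeFaces J a)
    (φ : ↥(Ideal.span (Set.range (X : σ → MvPolynomial σ k)) ^ s) →ₗ[MvPolynomial σ k]
      MvPolynomial σ k ⧸ J) : IsEventuallyMul φ := by
  let x (i : σ) : ↥(Ideal.span (Set.range (X : σ → MvPolynomial σ k)) ^ s) :=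
    ⟨X i ^ s, X_pow_mem_span_range_X_pow i s⟩
  choose y hy using fun i => Ideal.Quotient.mk_surjective (φ (x i))
  have smul_mk (r f : MvPolynomial σ k) :
      r • Ideal.Quotient.mk J f = Ideal.Quotient.mk J (r * f) := rfl
  have hcocycle (i j : σ) : X j ^ s * y i - X i ^ s * y j ∈ J := by
    rw [← Ideal.Quotient.eq, ← smul_mk, ← smul_mk, hy, hy, ← map_smul, ← map_smul]
    exact congr_arg φ (Subtype.ext (mul_comm _ _))
  obtain ⟨h, hh⟩ := exists_X_pow_mul_sub_mem hJ hΔ hedge hcocycle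
  refine isEventuallyMul_of_forall_generator φ (Ideal.Quotient.mk J h) fun i => ?_
  obtain ⟨N, hN⟩ := hh i
  refine ⟨N + s, (X i ^ N : MvPolynomial σ k) • x i, (pow_add _ _ _).symm, ?_⟩
  rw [map_smul, ← hy, smul_mk, smul_mk, Ideal.Quotient.eq, Submodule.coe_smul, smul_eq_mul,
    mul_assoc, ← mul_sub]
  exact hN

end VanishingCriterion

section NonvanishingCriterion

variable {σ k : Type*} [CommRing k]

/-- The substitution that sets the variables outside `F` to zero. -/
def killVarsOutside (F : Set σ) : MvPolynomial σ k →ₐ[k] MvPolynomial σ k :=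
  aeval (F.indicator X)

variable {F : Set σ} {J : Ideal (MvPolynomial σ k)} {a : σ →₀ ℕ}

lemma killVarsOutside_X_of_mem {i : σ} (hi : i ∈ F) :
    killVarsOutside F (X i : MvPolynomial σ k) = X i := by
  rw [killVarsOutside, aeval_X, Set.indicator_of_mem hi]

lemma killVarsOutside_X_of_notMem {i : σ} (hi : i ∉ F) :
    killVarsOutside F (X i : MvPolynomial σ k) = 0 := by
  rw [killVarsOutside, aeval_X, Set.indicator_of_notMem hi]

lemma killVarsOutside_sub_mem (f : MvPolynomial σ k) :
    killVarsOutside F f - f ∈ Ideal.span (X '' Fᶜ : Set (MvPolynomial σ k)) := by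
  have hcomp : (Ideal.Quotient.mkₐ k (Ideal.span (X '' Fᶜ : Set (MvPolynomial σ k)))).comp
      (killVarsOutside F) = Ideal.Quotient.mkₐ k _ := by
    refine MvPolynomial.algHom_ext fun i => ?_
    rw [AlgHom.comp_apply]
    by_cases hi : i ∈ F
    · rw [killVarsOutside_X_of_mem hi]
    · rw [killVarsOutside_X_of_notMem hi, map_zero, eq_comm]
      exact Ideal.Quotient.eq_zero_iff_mem.2 (Ideal.subset_span ⟨i, hi, rfl⟩)
  exact Ideal.Quotient.eq.1 (DFunLike.congr_fun hcomp f)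

lemma killVarsOutside_mem {f : MvPolynomial σ k} (hf : f ∈ Ideal.span (Set.range X)) :
    killVarsOutside F f ∈ Ideal.span (X '' F : Set (MvPolynomial σ k)) := by
  suffices Ideal.span (Set.range X) ≤
      (Ideal.span (X '' F : Set (MvPolynomial σ k))).comap (killVarsOutside F) from this hf
  refine Ideal.span_le.2 ?_
  rintro _ ⟨i, rfl⟩
  rw [SetLike.mem_coe, Ideal.mem_comap]
  by_cases hi : i ∈ F
  · rw [killVarsOutside_X_of_mem hi]
    exact Ideal.subset_span ⟨i, hi, rfl⟩
  · rw [killVarsOutside_X_of_notMem hi]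
    exact zero_mem _

lemma monomial_mul_mul_mem
    (hcross : ∀ i ∈ F, ∀ j ∉ F, monomial (a + Finsupp.single i 1 + Finsupp.single j 1) 1 ∈ J)
    {p q : MvPolynomial σ k} (hp : p ∈ Ideal.span (X '' Fᶜ : Set (MvPolynomial σ k)))
    (hq : q ∈ Ideal.span (X '' F : Set (MvPolynomial σ k))) : monomial a 1 * (p * q) ∈ J := by
  suffices Ideal.span (X '' Fᶜ) * Ideal.span (X '' F) ≤
      Submodule.comap (LinearMap.mulLeft (MvPolynomial σ k) (monomial a 1)) J from
    this (Ideal.mul_mem_mul hp hq)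
  rw [Ideal.span_mul_span']
  refine Ideal.span_le.2 ?_
  rintro _ ⟨_, ⟨j, hj, rfl⟩, _, ⟨i, hi, rfl⟩, rfl⟩
  simpa [X, monomial_mul, add_assoc, add_comm (Finsupp.single j 1)] using hcross i hi j hj

/-- The homomorphism `f ↦ x^a f|_F` on the ideal of the variables, where `f|_F` is `f` with the
variables outside `F` set to zero. It is linear modulo `J` as soon as `J` contains the multiples of
`x^a x_i x_j` with `i ∈ F` and `j ∉ F`. -/
def separatingHom
    (hcross : ∀ i ∈ F, ∀ j ∉ F, monomial (a + Finsupp.single i 1 + Finsupp.single j 1) 1 ∈ J) :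
    ↥(Ideal.span (Set.range (X : σ → MvPolynomial σ k)) ^ 1) →ₗ[MvPolynomial σ k]
      MvPolynomial σ k ⧸ J where
  toFun f := Ideal.Quotient.mk J (monomial a 1 * killVarsOutside F (f : MvPolynomial σ k))
  map_add' f g := by rw [Submodule.coe_add, map_add, mul_add, map_add]
  map_smul' r f := by
    have hmem := monomial_mul_mul_mem hcross (killVarsOutside_sub_mem r)
      (killVarsOutside_mem (F := F) ((pow_one (Ideal.span (Set.range X))).le f.2))
    rw [Submodule.coe_smul, smul_eq_mul, map_mul (killVarsOutside F), RingHom.id_apply]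
    refine Ideal.Quotient.eq.2 ?_
    convert hmem using 1
    ring

theorem not_isEventuallyMul_separatingHom (hJ : IsMonomialIdeal J)
    (hcross : ∀ i ∈ F, ∀ j ∉ F, monomial (a + Finsupp.single i 1 + Finsupp.single j 1) 1 ∈ J)
    {i j : σ} (hi : i ∈ F) (hj : j ∉ F) (hia : {i} ∈ degreeFaces J a)
    (hja : {j} ∈ degreeFaces J a) : ¬ IsEventuallyMul (separatingHom hcross) := by
  classical
  rintro ⟨x, N, hx⟩
  obtain ⟨h, rfl⟩ := Ideal.Quotient.mk_surjective x
  have hmem (v : σ) :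
      monomial a 1 * killVarsOutside F (X v ^ (N + 1)) - X v ^ (N + 1) * h ∈ J :=
    have hv := X_pow_mem_span_range_X_pow (k := k) v (N + 1)
    Ideal.Quotient.eq.1 (hx ⟨X v ^ (N + 1), Ideal.pow_le_pow_right (by omega) hv⟩
      (Ideal.pow_le_pow_right N.le_succ hv))
  have hcoeff {v : σ} (hv : {v} ∈ degreeFaces J a) :=
    hJ.coeff_eq_zero (hmem v) hv (b := a + Finsupp.single v (N + 1)) fun w hw => by
      simp [Finset.notMem_singleton.1 hw]
  have hone : coeff a h = 1 := by
    have := hcoeff hia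
    rw [map_pow, killVarsOutside_X_of_mem hi, mul_comm, ← mul_sub, coeff_add_single_X_pow_mul,
      coeff_sub, coeff_monomial, if_pos rfl] at this
    exact (sub_eq_zero.1 this).symm
  have hzero : coeff a h = 0 := by
    have := hcoeff hja
    rwa [map_pow, killVarsOutside_X_of_notMem hj, zero_pow N.succ_ne_zero, mul_zero, zero_sub,
      coeff_neg, coeff_add_single_X_pow_mul, neg_eq_zero] at this
  refine hia a (fun _ _ => le_rfl) ?_
  rw [← hone, hzero, map_zero]
  exact J.zero_mem

end NonvanishingCriterion

section OddCycle

variable {σ : Type} {Γ : SimpleGraph σ}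

lemma exists_minimal_odd_loop (h : ¬ Γ.Colorable 2) :
    ∃ (u : σ) (w : Γ.Walk u u), Odd w.length ∧
      ∀ (v : σ) (q : Γ.Walk v v), Odd q.length → w.length ≤ q.length := by
  classical
  simp only [SimpleGraph.two_colorable_iff_forall_loop_even, not_forall, Nat.not_even_iff_odd] at h
  have hex : ∃ n, ∃ (u : σ) (w : Γ.Walk u u), Odd w.length ∧ w.length = n :=
    let ⟨u, w, hw⟩ := h
    ⟨_, u, w, hw, rfl⟩
  obtain ⟨u, w, hw, hlen⟩ := Nat.find_spec hex
  exact ⟨u, w, hw, fun v q hq => hlen ▸ Nat.find_min' hex ⟨v, q, hq, rfl⟩⟩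

/-- A repeated vertex cuts the loop into two shorter loops, one of which is odd. -/
lemma getVert_injOn_of_minimal_odd_loop {u : σ} {w : Γ.Walk u u} (hw : Odd w.length)
    (hmin : ∀ (v : σ) (q : Γ.Walk v v), Odd q.length → w.length ≤ q.length) :
    Set.InjOn w.getVert {i | i < w.length} := by
  suffices ∀ i j, i < j → j < w.length → w.getVert i ≠ w.getVert j by
    intro i hi j hj hij
    by_contra hne
    rcases Nat.lt_or_gt_of_ne hne with hlt | hlt
    · exact this i j hlt hj hij
    · exact this j i hlt hi hij.symm
  intro i j hij hj heq
  let inner : Γ.Walk (w.getVert i) (w.getVert i) :=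
    ((w.drop i).take (j - i)).copy rfl (by rw [SimpleGraph.Walk.drop_getVert, heq]; congr 1; omega)
  let outer : Γ.Walk u u := (w.take i).append ((w.drop j).copy heq.symm rfl)
  have hinner : inner.length = j - i := by
    simp only [inner, SimpleGraph.Walk.length_copy, SimpleGraph.Walk.take_length,
      SimpleGraph.Walk.drop_length]
    omega
  have houter : outer.length = w.length - (j - i) := by
    simp only [outer, SimpleGraph.Walk.length_append, SimpleGraph.Walk.length_copy,
      SimpleGraph.Walk.take_length, SimpleGraph.Walk.drop_length]
    omega
  rcases Nat.even_or_odd (j - i) with heven | hodd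
  · have := hmin _ outer (houter ▸ Nat.Odd.sub_even (by omega) hw heven)
    omega
  · have := hmin _ inner (hinner ▸ hodd)
    omega

lemma three_le_length_of_odd_loop {u : σ} {w : Γ.Walk u u} (hw : Odd w.length) :
    3 ≤ w.length := by
  have hne : w.length ≠ 1 := fun h => Γ.irrefl (w.adj_of_length_eq_one h)
  obtain ⟨r, hr⟩ := hw
  omega

lemma exists_isOddCycle_of_not_colorable (h : ¬ Γ.Colorable 2) :
    ∃ (m : ℕ) (c : ZMod m → σ), IsOddCycle Γ m c := by
  obtain ⟨u, w, hw, hmin⟩ := exists_minimal_odd_loop h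
  have hlen := three_le_length_of_odd_loop hw
  have : NeZero w.length := ⟨by omega⟩
  have : Fact (1 < w.length) := ⟨by omega⟩
  refine ⟨w.length, fun z => w.getVert z.val, hw, hlen, fun x y hxy => ?_, fun z => ?_⟩
  · exact ZMod.val_injective _ (getVert_injOn_of_minimal_odd_loop hw hmin (ZMod.val_lt x)
      (ZMod.val_lt y) hxy)
  · have hadj := w.adj_getVert_succ (ZMod.val_lt z)
    have hval : w.getVert (z + 1).val = w.getVert (z.val + 1) := by
      rw [ZMod.val_add, ZMod.val_one]
      rcases (Nat.succ_le_of_lt (ZMod.val_lt z)).eq_or_lt with hz | hz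
      · rw [← Nat.succ_eq_add_one, hz, Nat.mod_self, SimpleGraph.Walk.getVert_zero,
          SimpleGraph.Walk.getVert_length]
      · rw [Nat.mod_eq_of_lt hz]
    change Γ.Adj (w.getVert z.val) (w.getVert (z + 1).val)
    rwa [hval]

lemma colorable_induce_compl_closedNbhd
    (hdom : ∀ (m : ℕ) (c : ZMod m → σ), IsOddCycle Γ m c → Dominating Γ (Set.range c)) (i : σ) :
    (Γ.induce (closedNbhd Γ i)ᶜ).Colorable 2 := by
  by_contra hnot
  obtain ⟨m, c, hodd, hlen, hinj, hadj⟩ := exists_isOddCycle_of_not_colorable hnot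
  have hcycle : IsOddCycle Γ m (Subtype.val ∘ c) :=
    ⟨hodd, hlen, Subtype.val_injective.comp hinj, hadj⟩
  obtain ⟨_, ⟨z, rfl⟩, hz⟩ := hdom m _ hcycle i
    fun ⟨z, hz⟩ => (c z).2 (Or.inl hz)
  exact (c z).2 (Set.mem_insert_of_mem _ hz.symm)

end OddCycle

section EdgeIdeal

variable {σ k : Type} [Field k] {Γ : SimpleGraph σ} {t : ℕ} {b : σ →₀ ℕ}

lemma isMonomialIdeal_edgeIdeal : IsMonomialIdeal (edgeIdeal k Γ) := by
  have hspan : edgeIdeal k Γ = Ideal.span ((fun b => monomial b (1 : k)) ''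
      {b | ∃ i j, Γ.Adj i j ∧ b = Finsupp.single i 1 + Finsupp.single j 1}) := by
    rw [edgeIdeal]
    congr 1
    ext f
    constructor
    · rintro ⟨i, j, hij, rfl⟩
      exact ⟨_, ⟨i, j, hij, rfl⟩, by simp [X, monomial_mul]⟩
    · rintro ⟨_, ⟨i, j, hij, rfl⟩, rfl⟩
      exact ⟨i, j, hij, by simp [X, monomial_mul]⟩
  exact hspan ▸ isMonomialIdeal_span_monomial _

lemma monomial_edge_mem {i j : σ} (h : Γ.Adj i j) :
    monomial (Finsupp.single i 1 + Finsupp.single j 1) 1 ∈ edgeIdeal k Γ :=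
  Ideal.subset_span ⟨i, j, h, by simp [X, monomial_mul]⟩

lemma monomial_add_edge_mem_pow {i j : σ} (h : Γ.Adj i j)
    (hb : monomial b 1 ∈ edgeIdeal k Γ ^ t) :
    monomial (b + (Finsupp.single i 1 + Finsupp.single j 1)) 1 ∈ edgeIdeal k Γ ^ (t + 1) :=
  monomial_add_mem_pow hb ((pow_one (edgeIdeal k Γ)).ge (monomial_edge_mem h))

end EdgeIdeal

section DegreeOff

variable {σ : Type} [DecidableEq σ] {A : Set σ} {F G : Finset σ}

/-- The independent sets `F` and `G` uncrossed along a colour class `A` of their symmetric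
difference: meet on `A`, join off `A`. -/
def uncross (A : Set σ) (F G : Finset σ) : Finset σ :=
  open scoped Classical in {v ∈ F ∪ G | v ∈ A → v ∈ F ∩ G}

lemma mem_uncross {v : σ} : v ∈ uncross A F G ↔ v ∈ F ∪ G ∧ (v ∈ A → v ∈ F ∩ G) := by
  simp [uncross]

lemma uncross_union_uncross_compl (A : Set σ) (F G : Finset σ) :
    uncross A F G ∪ uncross Aᶜ F G = F ∪ G := by
  ext v
  simp only [Finset.mem_union, mem_uncross, Set.mem_compl_iff]
  tauto

lemma uncross_inter_uncross_compl (A : Set σ) (F G : Finset σ) :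
    uncross A F G ∩ uncross Aᶜ F G = F ∩ G := by
  ext v
  simp only [Finset.mem_inter, mem_uncross, Set.mem_compl_iff, Finset.mem_union]
  tauto

variable [Fintype σ] {Γ : SimpleGraph σ} {a b : σ →₀ ℕ}

lemma IsIndep.uncross (hF : IsIndep Γ F) (hG : IsIndep Γ G)
    (hA : ∀ u ∈ F \ G, ∀ v ∈ G \ F, Γ.Adj u v → (u ∈ A ↔ v ∉ A)) :
    IsIndep Γ (uncross A F G) := by
  intro u hu v hv hadj
  have hsymm := hadj.symm
  grind [IsIndep, mem_uncross]

lemma IsIndep.uncross_compl (hF : IsIndep Γ F) (hG : IsIndep Γ G)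
    (hA : ∀ u ∈ F \ G, ∀ v ∈ G \ F, Γ.Adj u v → (u ∈ A ↔ v ∉ A)) :
    IsIndep Γ (_root_.uncross Aᶜ F G) :=
  hF.uncross hG fun u hu v hv h => not_congr (hA u hu v hv h)

/-- The degree of `x^a` in the variables outside `F`, that is, the order of `x^a` along the prime
`P_F`. -/
def degreeOff (F : Finset σ) : (σ →₀ ℕ) →+ ℕ :=
  ∑ v ∈ Fᶜ, Finsupp.applyAddHom v

lemma degreeOff_apply (F : Finset σ) (a : σ →₀ ℕ) : degreeOff F a = ∑ v ∈ Fᶜ, a v := by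
  simp [degreeOff]

lemma degreeOff_single (F : Finset σ) (v : σ) (n : ℕ) :
    degreeOff F (Finsupp.single v n) = if v ∈ F then 0 else n := by
  simp [degreeOff_apply, Finsupp.single_apply]

lemma degreeOff_anti (h : F ⊆ G) (a : σ →₀ ℕ) : degreeOff G a ≤ degreeOff F a := by
  simp only [degreeOff_apply]
  exact Finset.sum_le_sum_of_subset (Finset.compl_subset_compl.2 h)

lemma degreeOff_mono (h : ∀ v ∉ F, b v ≤ a v) : degreeOff F b ≤ degreeOff F a := by
  simp only [degreeOff_apply]
  exact Finset.sum_le_sum fun v hv => h v (Finset.mem_compl.1 hv)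

lemma degreeOff_lt_degreeOff (h : ∀ v ∈ F, a v ≠ 0 → v ∈ G) {v : σ} (hvF : v ∉ F) (hvG : v ∈ G)
    (hv : a v ≠ 0) : degreeOff G a < degreeOff F a := by
  simp only [degreeOff_apply]
  calc ∑ w ∈ Gᶜ, a w ≤ ∑ w ∈ Fᶜ.erase v, a w := Finset.sum_le_sum_of_ne_zero fun w hw haw =>
        Finset.mem_erase.2 ⟨by rintro rfl; exact Finset.mem_compl.1 hw hvG,
          Finset.mem_compl.2 fun hwF => Finset.mem_compl.1 hw (h w hwF haw)⟩
    _ < ∑ w ∈ Fᶜ, a w := by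
      rw [← Finset.add_sum_erase _ _ (Finset.mem_compl.2 hvF)]
      omega

lemma degreeOff_uncross_add (A : Set σ) (F G : Finset σ) (a : σ →₀ ℕ) :
    degreeOff (uncross A F G) a + degreeOff (uncross Aᶜ F G) a =
      degreeOff F a + degreeOff G a := by
  simp only [degreeOff_apply]
  rw [← Finset.sum_union_inter, ← Finset.sum_union_inter (s₁ := Fᶜ), ← Finset.compl_inter,
    ← Finset.compl_union, uncross_union_uncross_compl, uncross_inter_uncross_compl,
    Finset.compl_inter, Finset.compl_union]

variable {k : Type} [Field k] {t : ℕ}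

lemma le_degreeOff_of_monomial_mem_pow (hF : IsIndep Γ F)
    (hb : monomial b 1 ∈ edgeIdeal k Γ ^ t) : t ≤ degreeOff F b := by
  let θ : MvPolynomial σ k →ₐ[k] Polynomial k := aeval fun v => if v ∈ F then 1 else Polynomial.X
  have hedge : edgeIdeal k Γ ≤ (Ideal.span {Polynomial.X}).comap θ := by
    refine Ideal.span_le.2 ?_
    rintro _ ⟨i, j, hij, rfl⟩
    simp only [θ, SetLike.mem_coe, Ideal.mem_comap, map_mul, aeval_X, Ideal.mem_span_singleton]
    split_ifs with hi hj
    · exact absurd hij (hF i hi j hj)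
    · exact dvd_mul_left _ _
    · exact dvd_mul_right _ _
    · exact dvd_mul_right _ _
  have hmonomial : θ (monomial b 1) = Polynomial.X ^ degreeOff F b := by
    simp only [θ, aeval_monomial, map_one, one_mul, ite_pow, one_pow, degreeOff_apply,
      Finsupp.prod_fintype, pow_zero, ite_self, implies_true]
    rw [Finset.prod_ite, Finset.prod_const_one, one_mul, Finset.prod_pow_eq_pow_sum,
      Finset.filter_not, Finset.filter_mem_eq_inter, Finset.univ_inter, Finset.compl_eq_univ_sdiff]
  have hdvd : (Polynomial.X ^ t : Polynomial k) ∣ Polynomial.X ^ degreeOff F b := by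
    rw [← Ideal.mem_span_singleton, ← Ideal.span_singleton_pow, ← hmonomial]
    exact Ideal.le_comap_pow θ t (Ideal.pow_right_mono hedge t hb)
  exact (pow_dvd_pow_iff Polynomial.X_ne_zero Polynomial.not_isUnit_X).1 hdvd

lemma mem_degreeFaces_of_degreeOff_lt (hF : IsIndep Γ F) (h : degreeOff F a < t) :
    F ∈ degreeFaces (edgeIdeal k Γ ^ t) a := fun _ hb hmem =>
  ((le_degreeOff_of_monomial_mem_pow hF hmem).trans (degreeOff_mono hb)).not_gt h

end DegreeOff

section KonigDuality

variable {σ : Type} {Γ : SimpleGraph σ} {i v : σ}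

lemma exists_colorClass_of_colorable (h : (Γ.induce (closedNbhd Γ i)ᶜ).Colorable 2)
    (hv : v ∉ closedNbhd Γ i) :
    ∃ A : Set σ, v ∉ A ∧ ∀ u ∉ closedNbhd Γ i, ∀ w ∉ closedNbhd Γ i, Γ.Adj u w →
      (u ∈ A ↔ w ∉ A) := by
  obtain ⟨C⟩ := h
  refine ⟨{w | ∃ hw : w ∉ closedNbhd Γ i, C ⟨w, hw⟩ ≠ C ⟨v, hv⟩}, fun ⟨_, hne⟩ => hne rfl,
    fun u hu w hw huw => ?_⟩
  have hvalid : C ⟨u, hu⟩ ≠ C ⟨w, hw⟩ := C.valid huw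
  simp only [Set.mem_ofPred_eq, hu, hw, not_false_eq_true, exists_true_left]
  omega

variable {k : Type} [Field k] [Fintype σ] [DecidableEq σ] {t : ℕ} {a : σ →₀ ℕ} {A : Set σ}

lemma notMem_closedNbhd_of_mem_of_notMem {F G : Finset σ} (hF : IsIndep Γ F) (hiF : i ∈ F)
    (hiG : i ∈ G) {u : σ} (hu : u ∈ F \ G) : u ∉ closedNbhd Γ i := by
  obtain ⟨huF, huG⟩ := Finset.mem_sdiff.1 hu
  rintro (rfl | hadj)
  · exact huG hiG
  · exact hF i hiF u huF hadj

/-- Independent sets containing `i` of least `degreeOff` are closed under uncrossing. -/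
lemma exists_tight_avoiding
    (hA : ∀ u ∉ closedNbhd Γ i, ∀ w ∉ closedNbhd Γ i, Γ.Adj u w → (u ∈ A ↔ w ∉ A))
    (ha : ∀ F, IsIndep Γ F → i ∈ F → t ≤ degreeOff F a) {U : Finset σ} (hU : U.Nonempty)
    (hUA : ∀ u ∈ U, u ∈ A)
    (htight : ∀ u ∈ U, ∃ F, IsIndep Γ F ∧ i ∈ F ∧ degreeOff F a = t ∧ u ∉ F ∧ v ∉ F) :
    ∃ F, IsIndep Γ F ∧ i ∈ F ∧ degreeOff F a = t ∧ Disjoint U F ∧ v ∉ F := by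
  induction hU using Finset.Nonempty.cons_induction with
  | singleton u => simpa using htight u
  | cons u U _ _ ih =>
    simp only [Finset.mem_cons, forall_eq_or_imp] at hUA htight
    obtain ⟨F, hF, hiF, hFt, huF, hvF⟩ := htight.1
    obtain ⟨G, hG, hiG, hGt, hUG, hvG⟩ := ih hUA.2 htight.2
    have hcolor : ∀ x ∈ F \ G, ∀ y ∈ G \ F, Γ.Adj x y → (x ∈ A ↔ y ∉ A) := fun x hx y hy =>
      hA x (notMem_closedNbhd_of_mem_of_notMem hF hiF hiG hx) y
        (notMem_closedNbhd_of_mem_of_notMem hG hiG hiF hy)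
    have hi (B : Set σ) : i ∈ uncross B F G := by simp [mem_uncross, hiF, hiG]
    have hsum := degreeOff_uncross_add A F G a
    have hmeet := ha _ (hF.uncross hG hcolor) (hi A)
    have hjoin := ha _ (hF.uncross_compl hG hcolor) (hi Aᶜ)
    refine ⟨uncross A F G, hF.uncross hG hcolor, hi A, by omega, ?_, ?_⟩
    · rw [Finset.disjoint_left] at hUG ⊢
      simp only [Finset.mem_cons, mem_uncross, Finset.mem_inter, forall_eq_or_imp]
      exact ⟨fun h => huF (h.2 hUA.1).1, fun w hw h => hUG hw (h.2 (hUA.2 w hw)).2⟩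
    · simp [mem_uncross, hvF, hvG]

/-- Otherwise some tight set `F` misses `v` together with all its neighbours in the support of `a`,
and exchanging the neighbours of `v` for `v` in `F` beats the bound. -/
lemma exists_adj_forall_tight_mem (hcol : (Γ.induce (closedNbhd Γ i)ᶜ).Colorable 2)
    (ha : ∀ F, IsIndep Γ F → i ∈ F → t ≤ degreeOff F a) (hzero : ∀ j, Γ.Adj i j → a j = 0)
    (hv : v ∉ closedNbhd Γ i) (hav : a v ≠ 0) (hnbr : ∃ u, Γ.Adj v u ∧ a u ≠ 0) :
    ∃ u, Γ.Adj v u ∧ a u ≠ 0 ∧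
      ∀ F, IsIndep Γ F → i ∈ F → degreeOff F a = t → u ∈ F ∨ v ∈ F := by
  classical
  by_contra! hcon
  obtain ⟨A, hvA, hA⟩ := exists_colorClass_of_colorable hcol hv
  have hvi : ¬ Γ.Adj v i := fun h => hv (Or.inr h.symm)
  obtain ⟨F, hF, hiF, hFt, hUF, hvF⟩ := exists_tight_avoiding (U := {u | Γ.Adj v u ∧ a u ≠ 0})
    hA ha (by simpa [Finset.Nonempty] using hnbr)
    (fun u hu => by
      obtain ⟨hvu, hau⟩ := (Finset.mem_filter.1 hu).2
      have hui : u ∉ closedNbhd Γ i := by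
        rintro (rfl | hiu)
        exacts [hvi hvu, hau (hzero u hiu)]
      exact (hA u hui v hv hvu.symm).2 hvA)
    (fun u hu => by
      obtain ⟨hvu, hau⟩ := (Finset.mem_filter.1 hu).2
      exact hcon u hvu hau)
  let G : Finset σ := insert v {w ∈ F | ¬ Γ.Adj v w}
  have hG : IsIndep Γ G := by
    intro x hx y hy hxy
    have hyx := hxy.symm
    have hirrefl := Γ.irrefl (v := v)
    simp only [G, Finset.mem_insert, Finset.mem_filter] at hx hy
    rcases hx with rfl | hx <;> rcases hy with rfl | hy <;> grind [IsIndep]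
  have hlt : degreeOff G a < degreeOff F a := by
    refine degreeOff_lt_degreeOff (fun w hw haw => ?_) hvF (Finset.mem_insert_self _ _) hav
    refine Finset.mem_insert_of_mem (Finset.mem_filter.2 ⟨hw, fun hvw => ?_⟩)
    exact Finset.disjoint_left.1 hUF (Finset.mem_filter.2 ⟨Finset.mem_univ w, hvw, haw⟩) hw
  have hle := ha G hG (Finset.mem_insert_of_mem (Finset.mem_filter.2 ⟨hiF, hvi⟩))
  omega

lemma exists_adj_of_forall_pos_degreeOff (ha : ∀ F, IsIndep Γ F → i ∈ F → 0 < degreeOff F a)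
    (hzero : ∀ j, Γ.Adj i j → a j = 0) :
    ∃ v ∉ closedNbhd Γ i, a v ≠ 0 ∧ ∃ u, Γ.Adj v u ∧ a u ≠ 0 := by
  classical
  let F : Finset σ := {w | ¬ Γ.Adj i w ∧ (w = i ∨ a w ≠ 0)}
  have hmem (w : σ) : w ∈ F ↔ ¬ Γ.Adj i w ∧ (w = i ∨ a w ≠ 0) := by simp [F]
  have hdeg : degreeOff F a = 0 := by
    rw [degreeOff_apply]
    refine Finset.sum_eq_zero fun w hw => ?_
    rw [Finset.mem_compl, hmem] at hw
    by_contra haw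
    exact hw ⟨fun h => haw (hzero w h), Or.inr haw⟩
  have hdep : ¬ IsIndep Γ F := fun h => (ha F h ((hmem i).2 ⟨Γ.irrefl, Or.inl rfl⟩)).ne' hdeg
  simp only [IsIndep, not_forall, not_not, hmem] at hdep
  obtain ⟨v, ⟨hiv, hv⟩, u, ⟨hiu, hu⟩, hvu⟩ := hdep
  have hvi : v ≠ i := by rintro rfl; exact hiu hvu
  have hui : u ≠ i := by rintro rfl; exact hiv hvu.symm
  exact ⟨v, by rintro (h | h); exacts [hvi h, hiv h], hv.resolve_left hvi, u, hvu,
    hu.resolve_left hui⟩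

theorem exists_monomial_add_single_mem_pow (hcol : (Γ.induce (closedNbhd Γ i)ᶜ).Colorable 2)
    (ha : ∀ F, IsIndep Γ F → i ∈ F → t ≤ degreeOff F a) :
    ∃ N, monomial (a + Finsupp.single i N) 1 ∈ edgeIdeal k Γ ^ t := by
  induction t generalizing a with
  | zero => exact ⟨0, by simp⟩
  | succ t ih =>
    by_cases hnbr : ∃ j, Γ.Adj i j ∧ a j ≠ 0
    · obtain ⟨j, hij, haj⟩ := hnbr
      obtain ⟨b, rfl⟩ : ∃ b, a = b + Finsupp.single j 1 :=
        ⟨_, (tsub_add_cancel_of_le (Finsupp.single_le_iff.2 (Nat.one_le_iff_ne_zero.2 haj))).symm⟩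
      obtain ⟨N, hN⟩ := ih (a := b) fun F hF hiF => by
        have hjF : j ∉ F := fun hjF => hF i hiF j hjF hij
        simpa [degreeOff_single, hjF] using ha F hF hiF
      refine ⟨N + 1, ?_⟩
      have hsplit : b + Finsupp.single j 1 + Finsupp.single i (N + 1) =
          b + Finsupp.single i N + (Finsupp.single i 1 + Finsupp.single j 1) := by
        rw [Finsupp.single_add]
        abel
      exact hsplit ▸ monomial_add_edge_mem_pow hij hN
    · have hzero (j : σ) (hij : Γ.Adj i j) : a j = 0 := by
        by_contra haj
        exact hnbr ⟨j, hij, haj⟩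
      obtain ⟨v, hv, hav, hu⟩ := exists_adj_of_forall_pos_degreeOff
        (fun F hF hiF => (Nat.succ_pos t).trans_le (ha F hF hiF)) hzero
      obtain ⟨u, hvu, hau, htight⟩ := exists_adj_forall_tight_mem hcol ha hzero hv hav hu
      obtain ⟨b, rfl⟩ : ∃ b, a = b + (Finsupp.single v 1 + Finsupp.single u 1) := by
        refine ⟨a - (Finsupp.single v 1 + Finsupp.single u 1), (tsub_add_cancel_of_le ?_).symm⟩
        intro w
        have := hvu.ne
        simp only [Finsupp.add_apply, Finsupp.single_apply]
        grind
      obtain ⟨N, hN⟩ := ih (a := b) fun F hF hiF => by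
        have hle := ha F hF hiF
        have hmem := htight F hF hiF
        simp only [map_add, degreeOff_single] at hle hmem
        grind [hF v]
      exact ⟨N, add_right_comm b _ (Finsupp.single i N) ▸ monomial_add_edge_mem_pow hvu hN⟩

end KonigDuality

section Vanishing

variable {σ : Type} [Fintype σ] [DecidableEq σ] {Γ : SimpleGraph σ} {F G : Finset σ} {i v : σ}

lemma IsIndep.exists_isMaxIndep_superset (hF : IsIndep Γ F) : ∃ G, IsMaxIndep Γ G ∧ F ⊆ G := by
  obtain ⟨G, hFG, hG⟩ := Finite.exists_le_maximal hF
  exact ⟨G, ⟨hG.prop, fun H hH hGH => (hG.eq_of_le hH hGH).symm⟩, hFG⟩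

lemma IsMaxIndep.exists_adj (hF : IsMaxIndep Γ F) (hv : v ∉ F) : ∃ u ∈ F, Γ.Adj u v := by
  by_contra! hnot
  have hindep : IsIndep Γ (insert v F) := by
    intro x hx y hy hxy
    have hsymm := hxy.symm
    have hindep := hF.1
    have hirrefl := Γ.irrefl (v := v)
    grind [IsIndep]
  exact hv (hF.2 _ hindep (Finset.subset_insert v F) ▸ Finset.mem_insert_self v F)

/-- The pairs of the theorem: disjoint maximal independent sets `F`, `G` with `Γ_{F ∪ G}`
connected. -/
def IsConnectedMaxIndepPair (Γ : SimpleGraph σ) (F G : Finset σ) : Prop :=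
  IsMaxIndep Γ F ∧ IsMaxIndep Γ G ∧ Disjoint F G ∧
    (Γ.induce ((F ∪ G : Finset σ) : Set σ)).Connected

lemma exists_split_of_not_connected (hF : IsMaxIndep Γ F) (hG : IsMaxIndep Γ G)
    (hFG : Disjoint F G) (hi : i ∈ F)
    (hnot : ¬ (Γ.induce ((F ∪ G : Finset σ) : Set σ)).Connected) :
    ∃ C : Set σ, (∀ u ∈ F, ∀ v ∈ G, Γ.Adj u v → (u ∈ C ↔ v ∈ C)) ∧
      (∃ u ∈ F, u ∈ C) ∧ (∃ u ∈ F, u ∉ C) ∧ (∃ v ∈ G, v ∈ C) ∧ ∃ v ∈ G, v ∉ C := by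
  let H := Γ.induce ((F ∪ G : Finset σ) : Set σ)
  have hi' : i ∈ F ∪ G := Finset.mem_union_left G hi
  let C : Set σ := {v | ∃ hv : v ∈ F ∪ G, H.Reachable ⟨i, hi'⟩ ⟨v, hv⟩}
  have hclosed : ∀ u ∈ F, ∀ v ∈ G, Γ.Adj u v → (u ∈ C ↔ v ∈ C) := by
    intro u hu v hv huv
    have hu' := Finset.mem_union_left G hu
    have hv' := Finset.mem_union_right F hv
    have hadj : H.Adj ⟨u, hu'⟩ ⟨v, hv'⟩ := huv
    exact ⟨fun ⟨_, h⟩ => ⟨hv', h.trans hadj.reachable⟩,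
      fun ⟨_, h⟩ => ⟨hu', h.trans hadj.symm.reachable⟩⟩
  have hadjF {u : σ} (hu : u ∈ F) : ∃ v ∈ G, (u ∈ C ↔ v ∈ C) := by
    obtain ⟨v, hv, hvu⟩ := hG.exists_adj (Finset.disjoint_left.1 hFG hu)
    exact ⟨v, hv, hclosed u hu v hv hvu.symm⟩
  have hadjG {v : σ} (hv : v ∈ G) : ∃ u ∈ F, (u ∈ C ↔ v ∈ C) := by
    obtain ⟨u, hu, huv⟩ := hF.exists_adj (Finset.disjoint_right.1 hFG hv)
    exact ⟨u, hu, hclosed u hu v hv huv⟩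
  have hiC : i ∈ C := ⟨hi', SimpleGraph.Reachable.refl _⟩
  obtain ⟨w, hw, hwC⟩ : ∃ w ∈ F ∪ G, w ∉ C := by
    by_contra! hall
    exact hnot (SimpleGraph.connected_iff_exists_forall_reachable _ |>.2
      ⟨⟨i, hi'⟩, fun w => (hall w w.2).2⟩)
  obtain ⟨u, hu, huC⟩ : ∃ u ∈ F, u ∉ C := by
    rcases Finset.mem_union.1 hw with hw | hw
    · exact ⟨w, hw, hwC⟩
    · obtain ⟨u, hu, huw⟩ := hadjG hw
      exact ⟨u, hu, mt huw.1 hwC⟩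
  obtain ⟨v, hv, hiv⟩ := hadjF hi
  obtain ⟨v', hv', huv'⟩ := hadjF hu
  exact ⟨C, hclosed, ⟨i, hi, hiC⟩, ⟨u, hu, huC⟩, ⟨v, hv, hiv.1 hiC⟩, v', hv', mt huv'.2 huC⟩

/-- Exchanging the parts of `F` and `G` off a union of components of `Γ_{F ∪ G}` gives two
independent sets of the same total degree, so one of them keeps the bound. -/
lemma exists_isIndep_meeting_of_not_connected (hF : IsMaxIndep Γ F) (hG : IsMaxIndep Γ G)
    (hFG : Disjoint F G) (hi : i ∈ F)
    (hnot : ¬ (Γ.induce ((F ∪ G : Finset σ) : Set σ)).Connected) {a : σ →₀ ℕ} {t : ℕ}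
    (hFa : degreeOff F a < t) (hGa : degreeOff G a < t) :
    ∃ H, IsIndep Γ H ∧ degreeOff H a < t ∧ (∃ u ∈ F, u ∈ H) ∧ ∃ v ∈ G, v ∈ H := by
  obtain ⟨C, hC, ⟨u, hu, huC⟩, ⟨u', hu', huC'⟩, ⟨v, hv, hvC⟩, v', hv', hvC'⟩ :=
    exists_split_of_not_connected hF hG hFG hi hnot
  let A : Set σ := {w | w ∈ F ↔ w ∉ C}
  have hA : ∀ x ∈ F \ G, ∀ y ∈ G \ F, Γ.Adj x y → (x ∈ A ↔ y ∉ A) := by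
    intro x hx y hy hxy
    rw [Finset.mem_sdiff] at hx hy
    simp [A, hx.1, hy.2, hC x hx.1 y hy.1 hxy]
  have hvF := Finset.disjoint_right.1 hFG hv
  have hvF' := Finset.disjoint_right.1 hFG hv'
  have hsum := degreeOff_uncross_add A F G a
  by_cases hlt : degreeOff (uncross A F G) a < t
  · exact ⟨_, hF.1.uncross hG.1 hA, hlt, ⟨u, hu, by simp [mem_uncross, A, hu, huC]⟩,
      v', hv', by simp [mem_uncross, A, hv', hvF', hvC']⟩
  · exact ⟨_, hF.1.uncross_compl hG.1 hA, by omega, ⟨u', hu', by simp [mem_uncross, A, hu', huC']⟩,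
      v, hv, by simp [mem_uncross, A, hv, hvF, hvC]⟩

variable {k : Type} [Field k] {t : ℕ} {a : σ →₀ ℕ}

lemma exists_isMaxIndep_of_singleton_mem_degreeFaces
    (hcol : (Γ.induce (closedNbhd Γ i)ᶜ).Colorable 2)
    (hi : {i} ∈ degreeFaces (edgeIdeal k Γ ^ t) a) :
    ∃ F, IsMaxIndep Γ F ∧ i ∈ F ∧ degreeOff F a < t := by
  by_contra! hnot
  obtain ⟨N, hN⟩ := exists_monomial_add_single_mem_pow (k := k) (t := t) (a := a) hcol
    fun F hF hiF => by
      obtain ⟨G, hG, hFG⟩ := hF.exists_isMaxIndep_superset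
      exact (hnot G hG (hFG hiF)).trans (degreeOff_anti hFG a)
  refine hi _ (fun v hv => ?_) hN
  simp [Ne.symm (Finset.notMem_singleton.1 hv)]

lemma not_complexDisconnected_degreeFaces
    (hcol : ∀ i, (Γ.induce (closedNbhd Γ i)ᶜ).Colorable 2)
    (hpair : ∀ F G, ¬ IsConnectedMaxIndepPair Γ F G) :
    ¬ ComplexDisconnected (degreeFaces (edgeIdeal k Γ ^ t) a) := by
  rintro ⟨A, B, ⟨i, hi⟩, ⟨j, hj⟩, hAB, hvertex, hface⟩
  obtain ⟨F, hF, hiF, hFa⟩ := exists_isMaxIndep_of_singleton_mem_degreeFaces (hcol i)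
    ((hvertex i).2 (Or.inl hi))
  obtain ⟨G, hG, hjG, hGa⟩ := exists_isMaxIndep_of_singleton_mem_degreeFaces (hcol j)
    ((hvertex j).2 (Or.inr hj))
  have hFface := mem_degreeFaces_of_degreeOff_lt (k := k) hF.1 hFa
  have hGface := mem_degreeFaces_of_degreeOff_lt (k := k) hG.1 hGa
  have hFA : ∀ u ∈ F, u ∈ A := fun u hu =>
    (hvertex u).1 (mem_degreeFaces_of_subset hFface (Finset.singleton_subset_iff.2 hu))
      |>.resolve_right
      fun huB => hface F hFface ⟨⟨i, hiF, hi⟩, u, hu, huB⟩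
  have hGB : ∀ v ∈ G, v ∈ B := fun v hv =>
    (hvertex v).1 (mem_degreeFaces_of_subset hGface (Finset.singleton_subset_iff.2 hv))
      |>.resolve_left
      fun hvA => hface G hGface ⟨⟨v, hv, hvA⟩, j, hjG, hj⟩
  have hFG : Disjoint F G := Finset.disjoint_left.2 fun v hvF hvG =>
    Set.disjoint_left.1 hAB (hFA v hvF) (hGB v hvG)
  obtain ⟨H, hH, hHa, ⟨u, hu, huH⟩, v, hv, hvH⟩ := exists_isIndep_meeting_of_not_connected hF hG hFG
    hiF (fun hconn => hpair F G ⟨hF, hG, hFG, hconn⟩) hFa hGa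
  exact hface H (mem_degreeFaces_of_degreeOff_lt hH hHa) ⟨⟨u, huH, hFA u hu⟩, v, hvH, hGB v hv⟩

lemma exists_ne_mem_of_isMaxIndep (hpair : ∀ F G, ¬ IsConnectedMaxIndepPair Γ F G)
    (hiso : NoIsolated Γ) (hF : IsMaxIndep Γ F) (hi : i ∈ F) : ∃ j ∈ F, i ≠ j := by
  by_contra! hF'
  have hadj {v : σ} (hv : v ≠ i) : Γ.Adj i v := by
    obtain ⟨u, hu, huv⟩ := hF.exists_adj (v := v) fun hvF => hv (hF' v hvF).symm
    rwa [hF' u hu]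
  obtain ⟨u, hiu⟩ := hiso i
  have hsingle : IsIndep Γ {u} := by simp [IsIndep]
  obtain ⟨G, hG, huG⟩ := hsingle.exists_isMaxIndep_superset
  refine hpair F G ⟨hF, hG, Finset.disjoint_left.2 fun v hv hvG => ?_,
    SimpleGraph.connected_iff_exists_forall_reachable _ |>.2
      ⟨⟨i, Finset.mem_union_left G hi⟩, fun w => ?_⟩⟩
  · exact hG.1 v hvG u (Finset.singleton_subset_iff.1 huG) (hF' v hv ▸ hiu)
  · by_cases hw : w.1 = i
    · exact (show ⟨i, Finset.mem_union_left G hi⟩ = w from Subtype.ext hw.symm) ▸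
        SimpleGraph.Reachable.refl _
    · exact SimpleGraph.Adj.reachable (hadj hw)

lemma exists_edge_mem_degreeFaces
    (hcol : ∀ i, (Γ.induce (closedNbhd Γ i)ᶜ).Colorable 2)
    (hpair : ∀ F G, ¬ IsConnectedMaxIndepPair Γ F G) (hiso : NoIsolated Γ)
    (hi : {i} ∈ degreeFaces (edgeIdeal k Γ ^ t) a) :
    ∃ j, i ≠ j ∧ {i, j} ∈ degreeFaces (edgeIdeal k Γ ^ t) a := by
  obtain ⟨F, hF, hiF, hFa⟩ := exists_isMaxIndep_of_singleton_mem_degreeFaces (hcol i) hi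
  obtain ⟨j, hj, hij⟩ := exists_ne_mem_of_isMaxIndep hpair hiso hF hiF
  exact ⟨j, hij, mem_degreeFaces_of_subset (mem_degreeFaces_of_degreeOff_lt hF.1 hFa)
    (by simp [Finset.insert_subset_iff, hiF, hj])⟩

end Vanishing

section Nonvanishing

variable {σ : Type} {Γ : SimpleGraph σ} {u w i j : σ}

/-- The exponent vector of the quadratic monomial `x_u x_v` attached to an edge `uv`. -/
def edgeDegree : Sym2 σ → σ →₀ ℕ :=
  Sym2.lift ⟨fun u v => Finsupp.single u 1 + Finsupp.single v 1, fun _ _ => add_comm _ _⟩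

lemma edgeDegree_mk (u v : σ) :
    edgeDegree s(u, v) = Finsupp.single u 1 + Finsupp.single v 1 :=
  rfl

lemma even_length_iff_mem_iff_mem {F : Finset σ} (p : Γ.Walk u w)
    (hp : ∀ x y, s(x, y) ∈ p.edges → (x ∈ F ↔ y ∉ F)) :
    Even p.length ↔ (u ∈ F ↔ w ∈ F) := by
  induction p with
  | nil => simp
  | cons h p ih =>
    have hu := hp _ _ (List.mem_cons_self ..)
    have ih := ih fun x y hxy => hp x y (List.mem_cons_of_mem _ hxy)
    rw [SimpleGraph.Walk.length_cons, Nat.even_add_one]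
    tauto

section EdgeProducts

variable (k : Type) [Field k]

lemma monomial_sum_edgeDegree_mem_pow {E : Multiset (Sym2 σ)} (hE : ∀ e ∈ E, e ∈ Γ.edgeSet) :
    monomial (E.map edgeDegree).sum 1 ∈ edgeIdeal k Γ ^ E.card := by
  induction E using Multiset.induction_on with
  | empty => simp
  | cons e E ih =>
    induction e with
    | h u v =>
      rw [Multiset.map_cons, Multiset.sum_cons, Multiset.card_cons, add_comm (edgeDegree _)]
      exact monomial_add_edge_mem_pow (hE _ (Multiset.mem_cons_self _ _))
        (ih fun e he => hE e (Multiset.mem_cons_of_mem he))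

/-- Along a walk `v₀ v₁ v₂ …` of even length, `x_{v₀}` times the product of all edges is the
product of the squares of every other edge times the last variable. -/
lemma exists_walk_degree_eq (p : Γ.Walk u w) :
    (Even p.length → ∃ c, monomial c 1 ∈ edgeIdeal k Γ ^ p.length ∧
      (p.edges.map edgeDegree).sum + Finsupp.single u 1 = c + Finsupp.single w 1) ∧
    (Odd p.length → ∃ c, monomial c 1 ∈ edgeIdeal k Γ ^ (p.length - 1) ∧
      (p.edges.map edgeDegree).sum = c + (Finsupp.single u 1 + Finsupp.single w 1)) := by
  induction p with
  | nil => exact ⟨fun _ => ⟨0, by simp⟩, by simp⟩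
  | @cons u v w huv p ih =>
    simp only [SimpleGraph.Walk.length_cons, SimpleGraph.Walk.edges_cons, List.map_cons,
      List.sum_cons, edgeDegree_mk, Nat.even_add_one, Nat.odd_add_one, Nat.not_even_iff_odd,
      Nat.not_odd_iff_even, Nat.add_sub_cancel]
    constructor
    · intro hodd
      obtain ⟨c, hc, hsum⟩ := ih.2 hodd
      have hsquare := monomial_add_edge_mem_pow huv (monomial_add_edge_mem_pow huv hc)
      rw [Nat.sub_add_cancel hodd.pos] at hsquare
      refine ⟨_, hsquare, ?_⟩
      rw [hsum]
      abel
    · intro heven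
      obtain ⟨c, hc, hsum⟩ := ih.1 heven
      refine ⟨c, hc, ?_⟩
      rw [add_assoc, add_comm (Finsupp.single v 1), hsum]
      abel

lemma monomial_sum_edgeDegree_add_mem_pow {E : Multiset (Sym2 σ)} (hE : ∀ e ∈ E, e ∈ Γ.edgeSet)
    (p : Γ.Walk i w) (hp : (p.edges : Multiset (Sym2 σ)) ≤ E) (heven : Even p.length)
    (hwj : Γ.Adj w j) :
    monomial ((E.map edgeDegree).sum + Finsupp.single i 1 + Finsupp.single j 1) 1 ∈
      edgeIdeal k Γ ^ (E.card + 1) := by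
  obtain ⟨D, rfl⟩ := Multiset.le_iff_exists_add.1 hp
  obtain ⟨c, hc, hsum⟩ := (exists_walk_degree_eq k p).1 heven
  have hD := monomial_sum_edgeDegree_mem_pow k fun e he => hE e (Multiset.mem_add.2 (Or.inr he))
  have hprod := monomial_add_edge_mem_pow hwj (monomial_add_mem_pow hc hD)
  have hdegree : ((p.edges + D : Multiset (Sym2 σ)).map edgeDegree).sum + Finsupp.single i 1 +
      Finsupp.single j 1 = c + (D.map edgeDegree).sum +
        (Finsupp.single w 1 + Finsupp.single j 1) := by
    rw [Multiset.map_add, Multiset.sum_add, Multiset.map_coe, Multiset.sum_coe,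
      add_right_comm (List.sum _), hsum]
    abel
  rwa [hdegree, Multiset.card_add, Multiset.coe_card, SimpleGraph.Walk.length_edges]

end EdgeProducts

lemma exists_edges_of_connected_induce {U : Finset σ} (hU : (Γ.induce (U : Set σ)).Connected) :
    ∃ E : Multiset (Sym2 σ), E.card + 1 = U.card ∧
      (∀ x y, s(x, y) ∈ E → x ∈ U ∧ y ∈ U ∧ Γ.Adj x y) ∧
      ∀ u ∈ U, ∀ w ∈ U, ∃ p : Γ.Walk u w, (p.edges : Multiset (Sym2 σ)) ≤ E := by
  classical
  obtain ⟨T, hTΓ, hT⟩ := hU.exists_isTree_le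
  let ι : T →g Γ := ⟨Subtype.val, fun h => hTΓ h⟩
  refine ⟨T.edgeFinset.val.map (Sym2.map ι), ?_, fun x y hxy => ?_, fun u hu w hw => ?_⟩
  · simpa using hT.card_edgeFinset
  · obtain ⟨e, he, hexy⟩ := Multiset.mem_map.1 hxy
    induction e with
    | h u v =>
      have hadj : Γ.Adj u v := ι.map_rel (SimpleGraph.mem_edgeFinset.1 he)
      rcases Sym2.eq_iff.1 hexy with ⟨rfl, rfl⟩ | ⟨rfl, rfl⟩
      · exact ⟨u.2, v.2, hadj⟩
      · exact ⟨v.2, u.2, hadj.symm⟩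
  · obtain ⟨p, hp, -⟩ := hT.existsUnique_path ⟨u, hu⟩ ⟨w, hw⟩
    refine ⟨p.map ι, ?_⟩
    rw [SimpleGraph.Walk.edges_map, ← Multiset.map_coe]
    refine Multiset.map_le_map ((Multiset.le_iff_subset ?_).2 fun e he => ?_)
    · exact Multiset.coe_nodup.2 hp.isTrail.edges_nodup
    · exact SimpleGraph.mem_edgeFinset.2 (p.edges_subset_edgeSet (Multiset.mem_coe.1 he))

variable [Fintype σ] [DecidableEq σ] {F G : Finset σ} {t : ℕ}

lemma IsConnectedMaxIndepPair.exists_adj (h : IsConnectedMaxIndepPair Γ F G) :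
    ∃ x ∈ F, ∃ y ∈ G, Γ.Adj x y := by
  obtain ⟨hF, hG, hFG, hconn⟩ := h
  obtain ⟨u, hu⟩ := hconn.nonempty
  rcases Finset.mem_union.1 hu with hu | hu
  · obtain ⟨v, hv, hvu⟩ := hG.exists_adj (Finset.disjoint_left.1 hFG hu)
    exact ⟨u, hu, v, hv, hvu.symm⟩
  · obtain ⟨v, hv, hvu⟩ := hF.exists_adj (Finset.disjoint_right.1 hFG hu)
    exact ⟨v, hv, u, hu, hvu⟩

lemma IsConnectedMaxIndepPair.symm (h : IsConnectedMaxIndepPair Γ F G) :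
    IsConnectedMaxIndepPair Γ G F :=
  ⟨h.2.1, h.1, h.2.2.1.symm, Finset.union_comm F G ▸ h.2.2.2⟩

lemma IsConnectedMaxIndepPair.mem_left_iff_notMem (h : IsConnectedMaxIndepPair Γ F G)
    (hu : u ∈ F ∪ G) (hw : w ∈ F ∪ G) (huw : Γ.Adj u w) : u ∈ F ↔ w ∉ F := by
  obtain ⟨hF, hG, -, -⟩ := h
  have hF' := hF.1 u
  have hG' := hG.1 u
  grind

lemma IsConnectedMaxIndepPair.exists_edges (h : IsConnectedMaxIndepPair Γ F G)
    (ht : F.card + G.card ≤ t) :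
    ∃ E : Multiset (Sym2 σ), E.card + 1 = t ∧
      (∀ x y, s(x, y) ∈ E → x ∈ F ∪ G ∧ y ∈ F ∪ G ∧ Γ.Adj x y) ∧
      ∀ u ∈ F ∪ G, ∀ w ∈ F ∪ G, ∃ p : Γ.Walk u w, (p.edges : Multiset (Sym2 σ)) ≤ E := by
  obtain ⟨E, hcard, hE, hwalk⟩ := exists_edges_of_connected_induce h.2.2.2
  obtain ⟨x, hx, y, hy, hxy⟩ := h.exists_adj
  rw [Finset.card_union_of_disjoint h.2.2.1] at hcard
  refine ⟨E + Multiset.replicate (t - (F.card + G.card)) s(x, y), ?_, fun u v huv => ?_,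
    fun u hu w hw => ?_⟩
  · rw [Multiset.card_add, Multiset.card_replicate]
    omega
  · rcases Multiset.mem_add.1 huv with huv | huv
    · exact hE u v huv
    · have hx' := Finset.mem_union_left G hx
      have hy' := Finset.mem_union_right F hy
      rcases Sym2.eq_iff.1 (Multiset.eq_of_mem_replicate huv) with ⟨rfl, rfl⟩ | ⟨rfl, rfl⟩
      · exact ⟨hx', hy', hxy⟩
      · exact ⟨hy', hx', hxy.symm⟩
  · obtain ⟨p, hp⟩ := hwalk u hu w hw
    exact ⟨p, hp.trans (Multiset.le_add_right _ _)⟩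

lemma IsConnectedMaxIndepPair.degreeOff_sum_edgeDegree (h : IsConnectedMaxIndepPair Γ F G)
    {E : Multiset (Sym2 σ)} (hE : ∀ x y, s(x, y) ∈ E → x ∈ F ∪ G ∧ y ∈ F ∪ G ∧ Γ.Adj x y) :
    degreeOff F (E.map edgeDegree).sum = E.card := by
  have hone : ∀ e ∈ E, degreeOff F (edgeDegree e) = 1 := by
    intro e he
    induction e with
    | h u v =>
      obtain ⟨hu, hv, huv⟩ := hE u v he
      have hmem := h.mem_left_iff_notMem hu hv huv
      by_cases huF : u ∈ F <;> simp_all [edgeDegree_mk, degreeOff_single]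
  rw [map_multiset_sum, Multiset.map_map,
    Multiset.map_congr (f := degreeOff F ∘ edgeDegree) (g := fun _ => 1) rfl hone,
    Multiset.map_const', Multiset.sum_replicate, smul_eq_mul, mul_one]

theorem IsConnectedMaxIndepPair.exists_not_isEventuallyMul (k : Type) [Field k]
    (h : IsConnectedMaxIndepPair Γ F G) (ht : F.card + G.card ≤ t) :
    ∃ φ : ↥(maxIdeal k σ ^ 1) →ₗ[MvPolynomial σ k] MvPolynomial σ k ⧸ edgeIdeal k Γ ^ t,
      ¬ IsEventuallyMul φ := by
  obtain ⟨E, rfl, hE, hwalk⟩ := h.exists_edges ht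
  let a := (E.map edgeDegree).sum
  have hedge : ∀ e ∈ E, e ∈ Γ.edgeSet := fun e => e.ind fun x y hxy => (hE x y hxy).2.2
  have hcross : ∀ i ∈ (F : Set σ), ∀ j ∉ (F : Set σ),
      monomial (a + Finsupp.single i 1 + Finsupp.single j 1) 1 ∈
        edgeIdeal k Γ ^ (E.card + 1) := by
    intro i hi j hj
    obtain ⟨w, hw, hwj⟩ := h.1.exists_adj hj
    obtain ⟨p, hp⟩ := hwalk i (Finset.mem_union_left G hi) w (Finset.mem_union_left G hw)
    have halternates : ∀ x y, s(x, y) ∈ p.edges → (x ∈ F ↔ y ∉ F) := fun x y hxy => by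
      obtain ⟨hx, hy, hadj⟩ := hE x y (Multiset.mem_of_le hp hxy)
      exact h.mem_left_iff_notMem hx hy hadj
    exact monomial_sum_edgeDegree_add_mem_pow k hedge p hp
      ((even_length_iff_mem_iff_mem p halternates).2 (iff_of_true hi hw)) hwj
  obtain ⟨x, hx, y, hy, -⟩ := h.exists_adj
  have hFface : F ∈ degreeFaces (edgeIdeal k Γ ^ (E.card + 1)) a :=
    mem_degreeFaces_of_degreeOff_lt h.1.1 (by simp [a, h.degreeOff_sum_edgeDegree hE])
  have hGface : G ∈ degreeFaces (edgeIdeal k Γ ^ (E.card + 1)) a :=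
    mem_degreeFaces_of_degreeOff_lt h.2.1.1 (by
      simp [a, h.symm.degreeOff_sum_edgeDegree (by simpa only [Finset.union_comm] using hE)])
  exact ⟨separatingHom hcross, not_isEventuallyMul_separatingHom (isMonomialIdeal_edgeIdeal.pow _)
    hcross hx (Finset.disjoint_right.1 h.2.2.1 hy)
    (mem_degreeFaces_of_subset hFface (Finset.singleton_subset_iff.2 hx))
    (mem_degreeFaces_of_subset hGface (Finset.singleton_subset_iff.2 hy))⟩

end Nonvanishing

theorem stmt7_general (k : Type) [Field k] {σ : Type} [Fintype σ] [DecidableEq σ]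
    (Γ : SimpleGraph σ) (hiso : NoIsolated Γ)
    (hdom : ∀ (m : ℕ) (c : ZMod m → σ), IsOddCycle Γ m c → Dominating Γ (Set.range c)) :
    ((∃ t : ℕ, 1 ≤ t ∧ Nontrivial (locCoh k (edgeIdeal k Γ ^ t) 1)) ↔
      ∃ F G : Finset σ, IsConnectedMaxIndepPair Γ F G) ∧
    ∀ F G : Finset σ, IsConnectedMaxIndepPair Γ F G →
      ∀ t : ℕ, F.card + G.card ≤ t → Nontrivial (locCoh k (edgeIdeal k Γ ^ t) 1) := by
  have hnonvanishing : ∀ F G : Finset σ, IsConnectedMaxIndepPair Γ F G →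
      ∀ t : ℕ, F.card + G.card ≤ t → Nontrivial (locCoh k (edgeIdeal k Γ ^ t) 1) :=
    fun F G h t ht => nontrivial_localCohomology_one_iff.2 ⟨1, h.exists_not_isEventuallyMul k ht⟩
  refine ⟨⟨?_, fun ⟨F, G, h⟩ => ?_⟩, hnonvanishing⟩
  · rintro ⟨t, -, hnontrivial⟩
    by_contra! hpair
    have hcol := colorable_induce_compl_closedNbhd hdom
    obtain ⟨s, φ, hφ⟩ := nontrivial_localCohomology_one_iff.1 hnontrivial
    exact hφ (isEventuallyMul_of_degreeFaces (isMonomialIdeal_edgeIdeal.pow t)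
      (fun _ => not_complexDisconnected_degreeFaces hcol hpair)
      (fun _ _ => exists_edge_mem_degreeFaces hcol hpair hiso) φ)
  · obtain ⟨x, hx, -⟩ := h.exists_adj
    exact ⟨F.card + G.card, (Finset.card_pos.2 ⟨x, hx⟩).trans_le le_self_add,
      hnonvanishing F G h _ le_rfl⟩

/-- Let `Γ` be a connected non-bipartite graph in which the vertex set
of every odd cycle is dominating. Then `H^1_m(R/I^t) ≠ 0` for some `t ≥ 1` if and only if
`Γ` has two disjoint maximal independent sets `F, G` with `Γ_{F ∪ G}` connected; in this
case `H^1_m(R/I^t) ≠ 0` for all `t ≥ |F| + |G|`. -/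
theorem stmt7 (k : Type) [Field k] (n : ℕ) (Γ : SimpleGraph (Fin n))
    (hiso : NoIsolated Γ) (hconn : Γ.Connected) (hnb : ¬ Γ.Colorable 2)
    (hdom : ∀ (m : ℕ) (c : ZMod m → Fin n), IsOddCycle Γ m c →
      Dominating Γ (Set.range c)) :
    ((∃ t : ℕ, 1 ≤ t ∧ Nontrivial (locCoh k ((edgeIdeal k Γ) ^ t) 1)) ↔
      ∃ F G : Finset (Fin n), IsMaxIndep Γ F ∧ IsMaxIndep Γ G ∧ Disjoint F G ∧
        (Γ.induce ((F ∪ G : Finset (Fin n)) : Set (Fin n))).Connected) ∧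
    (∀ F G : Finset (Fin n), IsMaxIndep Γ F → IsMaxIndep Γ G → Disjoint F G →
      (Γ.induce ((F ∪ G : Finset (Fin n)) : Set (Fin n))).Connected →
      ∀ t : ℕ, F.card + G.card ≤ t →
        Nontrivial (locCoh k ((edgeIdeal k Γ) ^ t) 1)) := by
  obtain ⟨hiff, hall⟩ := stmt7_general k Γ hiso hdom
  exact ⟨hiff, fun F G hF hG hFG hind => hall F G ⟨hF, hG, hFG, hind⟩⟩

end
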